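/- Every 2-connected planar graph with minimum degree at least 5 contains K₄ minus an edge as a subgraph. -/

import Mathlib

open SimpleGraph

variable {V : Type*}

/-- `K₄⁻` (two triangles sharing the edge `ab`; the edge `cd` may be absent)
occurs as a subgraph of `G`. -/
def containsK4minus (G : SimpleGraph V) : Prop :=
  ∃ a b c d : V, a ≠ b ∧ a ≠ c ∧ a ≠ d ∧ b ≠ c ∧ b ≠ d ∧ c ≠ d ∧
    G.Adj a b ∧ G.Adj a c ∧ G.Adj a d ∧ G.Adj b c ∧ G.Adj b d

/-- `G` contains a subdivision of `K₅`: five branch vertices joined by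
pairwise internally disjoint paths. -/
def containsK5Subdivision (G : SimpleGraph V) : Prop :=
  ∃ (b : Fin 5 → V) (P : ∀ i j : Fin 5, G.Walk (b i) (b j)),
    Function.Injective b ∧
    (∀ i j, i ≠ j → (P i j).IsPath) ∧
    (∀ i j, i ≠ j → ∀ k, b k ∈ (P i j).support → k = i ∨ k = j) ∧
    (∀ i j i' j', i < j → i' < j' → (i, j) ≠ (i', j') →
      ∀ x, x ∈ (P i j).support → x ∈ (P i' j').support → x = b i ∨ x = b j)

/-- `G` has an `H`-minor (branch sets are connected, disjoint, joined by edges). -/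
def HasMinor {W : Type*} (G : SimpleGraph V) (H : SimpleGraph W) : Prop :=
  ∃ f : W → Set V,
    (∀ w, (G.induce (f w)).Connected) ∧
    (∀ w₁ w₂, w₁ ≠ w₂ → Disjoint (f w₁) (f w₂)) ∧
    (∀ w₁ w₂, H.Adj w₁ w₂ → ∃ x ∈ f w₁, ∃ y ∈ f w₂, G.Adj x y)

/-- Planarity, via Wagner's theorem: no `K₅` and no `K₃,₃` minor. -/
def IsPlanar (G : SimpleGraph V) : Prop :=
  ¬ HasMinor G (completeGraph (Fin 5)) ∧
  ¬ HasMinor G (completeBipartiteGraph (Fin 3) (Fin 3))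

/-- `G` is `k`-connected: more than `k` vertices, and removing fewer than `k`
vertices leaves a connected graph. -/
def IsKConnected (k : ℕ) (G : SimpleGraph V) : Prop :=
  k < (Set.univ : Set V).ncard ∧
  ∀ S : Set V, S.Finite → S.ncard < k → (G.induce Sᶜ).Connected

/-- Boundary of a subgraph `H` of `G`: vertices of `H` incident with an edge
of `G` not in `H`. -/
def bnd (G : SimpleGraph V) (H : G.Subgraph) : Set V :=
  {v | v ∈ H.verts ∧ ∃ w, G.Adj v w ∧ ¬ H.Adj v w}

/-- A `k`-hammock: connected subgraph with boundary of size `k`. -/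
def IsHammock (G : SimpleGraph V) (k : ℕ) (H : G.Subgraph) : Prop :=
  H.Connected ∧ (bnd G H).ncard = k

def TrivialHammock (G : SimpleGraph V) (H : G.Subgraph) : Prop :=
  H.verts = bnd G H

def DegenerateHammock (G : SimpleGraph V) (H : G.Subgraph) : Prop :=
  H.verts.ncard = (bnd G H).ncard + 1

def FatHammock (G : SimpleGraph V) (H : G.Subgraph) : Prop :=
  (bnd G H).ncard + 2 ≤ H.verts.ncard

/-- A `4`-hammock is minimal if all its proper `4`-hammocks are trivial or degenerate. -/
def Minimal4Hammock (G : SimpleGraph V) (H : G.Subgraph) : Prop :=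
  IsHammock G 4 H ∧
  ∀ H' : G.Subgraph, H' ≤ H → H' ≠ H → IsHammock G 4 H' →
    TrivialHammock G H' ∨ DegenerateHammock G H'

def MinimalFat4Hammock (G : SimpleGraph V) (H : G.Subgraph) : Prop :=
  Minimal4Hammock G H ∧ FatHammock G H

/-- The list `l` records a cycle of `G` (vertices in clockwise order). -/
def IsCycleList (G : SimpleGraph V) (l : List V) : Prop :=
  l.Nodup ∧ 3 ≤ l.length ∧
    ∀ i : Fin l.length,
      G.Adj (l.get i) (l.get ⟨((i : ℕ) + 1) % l.length, Nat.mod_lt _ i.pos⟩)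

/-- `x` and `y` are consecutive on the cyclic list `C`. -/
def CycAdj (C : List V) (x y : V) : Prop :=
  ∃ i : Fin C.length,
    (C.get i = x ∧ C.get ⟨((i : ℕ) + 1) % C.length, Nat.mod_lt _ i.pos⟩ = y) ∨
    (C.get i = y ∧ C.get ⟨((i : ℕ) + 1) % C.length, Nat.mod_lt _ i.pos⟩ = x)

/-- Clockwise (forward) distance between positions on a cycle of length `n`. -/
def cycDist (n i j : ℕ) : ℕ := (j + n - i) % n

/-- The open segment of the cycle `C` from `a` clockwise to `b`. -/
def segOpen (C : List V) (a b : V) : Set V :=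
  {x | ∃ i j k : Fin C.length, C.get i = a ∧ C.get j = b ∧ C.get k = x ∧
    k ≠ i ∧ k ≠ j ∧ cycDist C.length (i : ℕ) (k : ℕ) < cycDist C.length (i : ℕ) (j : ℕ)}

/-- The closed segment of the cycle `C` from `a` clockwise to `b`. -/
def segClosed (C : List V) (a b : V) : Set V := segOpen C a b ∪ {a, b}

/-- `a 0, a 1, a 2, a 3` appear in this clockwise order along the cycle `C`. -/
def ClockwiseOn (C : List V) (a : Fin 4 → V) : Prop :=
  ∃ p : Fin 4 → Fin C.length, (∀ j, C.get (p j) = a j) ∧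
    ∀ j k : Fin 4, j < k →
      cycDist C.length ((p 0 : Fin C.length) : ℕ) ((p j : Fin C.length) : ℕ) <
        cycDist C.length ((p 0 : Fin C.length) : ℕ) ((p k : Fin C.length) : ℕ)

/-- `x` and `y` are consecutive among the points of `S` on the cycle `C`:
one of the two open arcs between them misses `S`. -/
def ConsecutiveOn (C : List V) (S : Set V) (x y : V) : Prop :=
  segOpen C x y ∩ S = ∅ ∨ segOpen C y x ∩ S = ∅

/-- A combinatorial plane graph: a graph together with its facial cycles and a
distinguished outer face; every edge lies on exactly two faces and every vertex
on exactly `deg` faces (valid for `2`-connected plane graphs). -/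
structure PlaneGraph (V : Type*) where
  graph : SimpleGraph V
  faces : Finset (List V)
  outer : List V
  outer_mem : outer ∈ faces
  faces_cycle : ∀ f ∈ faces, IsCycleList graph f
  edge_two_faces : ∀ x y, graph.Adj x y →
    {f ∈ (faces : Set (List V)) | CycAdj f x y}.ncard = 2
  vertex_faces : ∀ v : V,
    {f ∈ (faces : Set (List V)) | v ∈ f}.ncard = (graph.neighborSet v).ncard

def Cofacial (P : PlaneGraph V) (u w : V) : Prop :=
  ∃ f ∈ P.faces, u ∈ f ∧ w ∈ f

/-- `C` is the rim of the facial wheel `S_u`: the induced cycle on the vertices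
cofacial with `u`, containing `N(u)` and separating `u` from the rest of the graph. -/
def IsFacialRim (P : PlaneGraph V) (u : V) (C : List V) : Prop :=
  IsCycleList P.graph C ∧ u ∉ C ∧
  (∀ w, w ∈ C ↔ (w ≠ u ∧ Cofacial P u w)) ∧
  P.graph.neighborSet u ⊆ {x | x ∈ C} ∧
  (∀ x ∈ C, ∀ y ∈ C, P.graph.Adj x y → CycAdj C x y) ∧
  (∀ w, w ∉ C → w ≠ u → ∀ p : P.graph.Walk u w, ∃ x ∈ p.support, x ∈ C)

/-- The facial wheel `S_u` (hub `u`, spokes, and rim `C`) is a subgraph of `H`. -/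
def WheelIn (G : SimpleGraph V) (H : G.Subgraph) (u : V) (C : List V) : Prop :=
  u ∈ H.verts ∧ (∀ x ∈ C, x ∈ H.verts) ∧
  (∀ x, G.Adj u x → H.Adj u x) ∧
  (∀ x y, CycAdj C x y → H.Adj x y)

/-- A system of `k` pairwise vertex-disjoint `(A,B)`-paths inside the subgraph `H`,
internally disjoint from `A ∪ B`. -/
structure Linkage (G : SimpleGraph V) (H : G.Subgraph) (A B : Set V) (k : ℕ) where
  s : Fin k → V
  t : Fin k → V
  walk : ∀ i, G.Walk (s i) (t i)
  isPath : ∀ i, (walk i).IsPath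
  support_mem : ∀ i, ∀ x ∈ (walk i).support, x ∈ H.verts
  edges_mem : ∀ i, ∀ e ∈ (walk i).edges, e ∈ H.edgeSet
  s_mem : ∀ i, s i ∈ A
  t_mem : ∀ i, t i ∈ B
  internal : ∀ i, ∀ x ∈ (walk i).support, x ≠ s i → x ≠ t i → x ∉ A ∧ x ∉ B
  disj : ∀ i j, i ≠ j → ∀ x ∈ (walk i).support, x ∉ (walk j).support

/-- A `C_u`-linkage: a `(bnd H, C)`-4-linkage in `H`. -/
abbrev CuLinkage (G : SimpleGraph V) (H : G.Subgraph) (C : List V) :=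
  Linkage G H (bnd G H) {x | x ∈ C} 4

/-- `α(L)`: the number of endpoints of the linkage lying in `N(u)`. -/
noncomputable def lAlpha (G : SimpleGraph V) (u : V) {H : G.Subgraph} {A B : Set V} {k : ℕ}
    (L : Linkage G H A B k) : ℕ :=
  {i : Fin k | L.t i ∈ G.neighborSet u}.ncard

/-- Data of a short wheel: the four neighbours of `u` in clockwise rim order,
two edge-disjoint triangles at `u`, and the two remaining rim segments of
order between 2 and 4, not both of order 4. -/
def ShortWheelOn (G : SimpleGraph V) (u : V) (C : List V) (n : Fin 4 → V) : Prop :=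
  ClockwiseOn C n ∧ Set.range n = G.neighborSet u ∧
  G.Adj (n 0) (n 1) ∧ G.Adj (n 2) (n 3) ∧
  (segOpen C (n 1) (n 2)).ncard ≤ 2 ∧ (segOpen C (n 3) (n 0)).ncard ≤ 2 ∧
  ¬((segOpen C (n 1) (n 2)).ncard = 2 ∧ (segOpen C (n 3) (n 0)).ncard = 2)

def IsShortWheel (G : SimpleGraph V) (u : V) (C : List V) : Prop :=
  (G.neighborSet u).ncard = 4 ∧ ∃ n, ShortWheelOn G u C n

/-- A short wheel which, if imbalanced (a segment of order 4), is proper with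
respect to the boundary set `B`: the interior of that segment avoids `B`. -/
def IsShortProperWheel (G : SimpleGraph V) (u : V) (C : List V) (B : Set V) : Prop :=
  (G.neighborSet u).ncard = 4 ∧ ∃ n, ShortWheelOn G u C n ∧
    ((segOpen C (n 1) (n 2)).ncard = 2 → segOpen C (n 1) (n 2) ∩ B = ∅) ∧
    ((segOpen C (n 3) (n 0)).ncard = 2 → segOpen C (n 3) (n 0) ∩ B = ∅)

/-!
The claim is strengthened so that it survives cutting the graph along at most two vertices: the
`K₄⁻` can be found avoiding any prescribed edge `uv`, even if `u` and `v` are allowed to have small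
degree. Given such a cut, pass to a side none of whose inner vertices is `u` or `v`, and prescribe
there the (possibly virtual) edge spanned by the cut.

This leaves the 3-connected case. There the nonseparating triangles play the role of the triangular
faces, and Euler's formula becomes `2 |E| + 8 ≤ 4 |V| + t`, where `t` is their number. It is proved
by induction, contracting an edge that keeps the graph 3-connected; the point is that, in the
absence of `K₅` and `K₃,₃` minors, at most two induced nonseparating cycles of length at most four
pass through an edge. If no `K₄⁻` avoids `uv`, then the triangles avoiding `uv` are edge-disjoint,
so that `3 (t - 2) ≤ |E| - 1`, which contradicts `5 |V| ≤ 2 |E| + 4`.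
-/

section Cardinality

theorem ncard_pair_le (a b : V) : ({a, b} : Set V).ncard ≤ 2 :=
  (Set.ncard_insert_le a {b}).trans_eq (by rw [Set.ncard_singleton])

theorem ncard_triple_le (a b c : V) : ({a, b, c} : Set V).ncard ≤ 3 :=
  (Set.ncard_insert_le a {b, c}).trans (Nat.succ_le_succ (ncard_pair_le b c))

theorem exists_notMem_of_ncard_lt_card {S : Set V} (h : S.ncard < Nat.card V) : ∃ v, v ∉ S := by
  rw [← Set.ne_univ_iff_exists_notMem]
  rintro rfl
  exact h.ne (Set.ncard_univ V)

end Cardinality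

/-- `A` is a *fragment* of the vertex cut `S`: a union of some, but not all, of the components
of `G - S`. -/
structure IsFragment (G : SimpleGraph V) (S A : Set V) : Prop where
  nonempty : A.Nonempty
  disjoint : Disjoint A S
  mem_union_of_adj : ∀ a ∈ A, ∀ b, G.Adj a b → b ∈ A ∪ S
  exists_notMem : ∃ o, o ∉ A ∪ S

/-- The vertex set `S` *separates* `G`: the graph `G - S` is disconnected. -/
def Separates (G : SimpleGraph V) (S : Set V) : Prop :=
  ∃ A, IsFragment G S A

section Fragments

variable {G : SimpleGraph V} {S A : Set V}

theorem IsFragment.compl (h : IsFragment G S A) : IsFragment G S (A ∪ S)ᶜ where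
  nonempty := h.exists_notMem
  disjoint := Set.disjoint_left.2 fun _ ha hs => ha (.inr hs)
  mem_union_of_adj a ha b hab := by
    by_contra hb
    have hbA : b ∈ A := by simp only [Set.mem_union, Set.mem_compl_iff] at hb; tauto
    exact ha (h.mem_union_of_adj b hbA a hab.symm)
  exists_notMem := by
    obtain ⟨a, ha⟩ := h.nonempty
    have := Set.disjoint_left.1 h.disjoint ha
    exact ⟨a, by simp_all⟩

theorem preconnected_induce_compl_iff :
    (G.induce Sᶜ).Preconnected ↔ ¬ Separates G S := by
  constructor
  · rintro hconn ⟨A, hA⟩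
    obtain ⟨a, ha⟩ := hA.nonempty
    obtain ⟨o, ho⟩ := hA.exists_notMem
    obtain ⟨p⟩ := hconn ⟨a, Set.disjoint_left.1 hA.disjoint ha⟩ ⟨o, fun h => ho (.inr h)⟩
    obtain ⟨d, -, hdA, hdA'⟩ := p.exists_boundary_dart (Subtype.val ⁻¹' A) ha fun h => ho (.inl h)
    rcases hA.mem_union_of_adj _ hdA _ d.adj with h | h
    exacts [hdA' h, d.snd.2 h]
  · intro hS u v
    by_contra huv
    refine hS ⟨Subtype.val '' {w | (G.induce Sᶜ).Reachable u w},
      ⟨u, u, .refl u, rfl⟩, ?_, ?_, v, ?_⟩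
    · exact Set.disjoint_left.2 fun _ ⟨w, _, hw⟩ => hw ▸ w.2
    · rintro _ ⟨a, ha, rfl⟩ b hab
      by_cases hb : b ∈ S
      · exact .inr hb
      · exact .inl ⟨⟨b, hb⟩, ha.trans (Adj.reachable (G := G.induce Sᶜ) (v := ⟨b, hb⟩) hab), rfl⟩
    · rintro (⟨w, hw, hwv⟩ | h)
      · exact huv (Subtype.ext hwv ▸ hw)
      · exact v.2 h

theorem IsFragment.exists_adj_of_not_separates {z : V} (hA : IsFragment G (insert z S) A)
    (hS : ¬ Separates G S) : ∃ v ∈ A, G.Adj z v := by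
  by_contra! hz
  refine hS ⟨A, hA.nonempty, hA.disjoint.mono_right (Set.subset_insert z S),
    fun a ha b hab => ?_, ?_⟩
  · rcases hA.mem_union_of_adj a ha b hab with h | rfl | h
    exacts [.inl h, (hz a ha hab.symm).elim, .inr h]
  · obtain ⟨o, ho⟩ := hA.exists_notMem
    exact ⟨o, fun h => ho (h.imp_right (Set.mem_insert_of_mem z))⟩

theorem not_separates_of_insert {y v : V} (h : ¬ Separates G (insert y S)) (hyv : G.Adj y v)
    (hv : v ∉ S) : ¬ Separates G S := by
  rintro ⟨A, hA⟩
  wlog hy : y ∉ A generalizing A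
  · exact this _ hA.compl fun hy' => hy fun hyA => hy' (.inl hyA)
  refine h ⟨A, hA.nonempty, ?_, fun a ha b hab => ?_, ?_⟩
  · exact Set.disjoint_insert_right.2 ⟨hy, hA.disjoint⟩
  · exact (hA.mem_union_of_adj a ha b hab).imp_right (Set.mem_insert_of_mem y)
  · by_cases hyS : y ∈ S
    · simpa [Set.insert_eq_of_mem hyS] using hA.exists_notMem
    · refine ⟨v, ?_⟩
      rintro (hvA | rfl | hvS)
      · exact (hA.mem_union_of_adj v hvA y hyv.symm).elim hy hyS
      · exact hyv.ne rfl
      · exact hv hvS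

theorem not_separates_top : ¬ Separates (⊤ : SimpleGraph V) S := by
  rintro ⟨A, hA⟩
  obtain ⟨a, ha⟩ := hA.nonempty
  obtain ⟨o, ho⟩ := hA.exists_notMem
  exact ho (hA.mem_union_of_adj a ha o fun hao => ho (.inl (hao ▸ ha)))

end Fragments

theorem isKConnected_iff [Finite V] {k : ℕ} {G : SimpleGraph V} :
    IsKConnected k G ↔ k < Nat.card V ∧ ∀ S : Set V, S.ncard < k → ¬ Separates G S := by
  rw [IsKConnected, Set.ncard_univ]
  refine and_congr_right fun hk => forall_congr' fun S => ?_
  simp only [S.toFinite, forall_const]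
  refine imp_congr_right fun hS => ?_
  rw [← preconnected_induce_compl_iff, connected_iff, and_iff_left]
  rw [Set.nonempty_coe_sort, Set.nonempty_compl]
  rintro rfl
  exact (hS.trans hk).ne (Set.ncard_univ V)

section ThreeConnected

variable [Finite V] {G : SimpleGraph V}

theorem IsKConnected.not_separates_pair (h : IsKConnected 3 G) (a b : V) :
    ¬ Separates G {a, b} :=
  (isKConnected_iff.1 h).2 _ (Nat.lt_succ_of_le (ncard_pair_le a b))

theorem IsKConnected.exists_adj_notMem_pair (h : IsKConnected 3 G) {y a b : V} (hya : y ≠ a)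
    (hyb : y ≠ b) : ∃ v, v ≠ a ∧ v ≠ b ∧ G.Adj y v := by
  by_contra! hy
  obtain ⟨o, ho⟩ : ∃ o, o ∉ ({y, a, b} : Set V) :=
    exists_notMem_of_ncard_lt_card ((ncard_triple_le y a b).trans_lt (isKConnected_iff.1 h).1)
  refine h.not_separates_pair a b ⟨{y}, Set.singleton_nonempty y, by simp [hya, hyb], ?_, o, ho⟩
  rintro _ rfl v hv
  grind

theorem IsKConnected.not_separates_triple (h : IsKConnected 3 G) (hcard : 5 ≤ Nat.card V)
    {x y a b : V} (hxy : G.Adj x y) (hya : y ≠ a) (hyb : y ≠ b) (hxa : G.Adj x a)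
    (hxb : G.Adj x b) (hS : ¬ Separates G {y, x, a, b}) :
    ¬ Separates G {x, a, b} ∨ (G.Adj y a ∧ G.Adj y b ∧ ¬ Separates G {y, a, b}) := by
  by_cases hy : ∃ v, v ∉ ({x, a, b} : Set V) ∧ G.Adj y v
  · obtain ⟨v, hv, hyv⟩ := hy
    exact .inl (not_separates_of_insert hS hyv hv)
  push Not at hy
  have hyb' : G.Adj y b := by
    obtain ⟨v, hvx, hva, hyv⟩ := h.exists_adj_notMem_pair hxy.ne' hya
    by_cases hvb : v = b
    · exact hvb ▸ hyv
    · exact (hy v (by simp [*]) hyv).elim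
  have hya' : G.Adj y a := by
    obtain ⟨v, hvx, hvb, hyv⟩ := h.exists_adj_notMem_pair hxy.ne' hyb
    by_cases hva : v = a
    · exact hva ▸ hyv
    · exact (hy v (by simp [*]) hyv).elim
  obtain ⟨v, hv, hxv⟩ : ∃ v, v ∉ ({y, a, b} : Set V) ∧ G.Adj x v := by
    by_contra! hx
    obtain ⟨o, ho⟩ : ∃ o, o ∉ ({x, y, a, b} : Set V) := exists_notMem_of_ncard_lt_card <|
      (Set.ncard_insert_le x _).trans_lt <| by have := ncard_triple_le y a b; omega
    refine h.not_separates_pair a b ⟨{x, y}, Set.insert_nonempty x _, ?_, ?_, o, by simp_all⟩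
    · simp [hxa.ne', hxb.ne', hya.symm, hyb.symm]
    · rintro _ (rfl | rfl) v hv
      · by_contra hv'
        exact hx v (by simp_all) hv
      · by_contra hv'
        exact hy v (by simp_all) hv
  rw [Set.insert_comm] at hS
  exact .inr ⟨hya', hyb', not_separates_of_insert hS hxv hv⟩

end ThreeConnected

/-- `D` is the vertex set of a component of `G - S`. -/
structure IsComponent (G : SimpleGraph V) (S D : Set V) : Prop where
  connected : (G.induce D).Connected
  disjoint : Disjoint D S
  mem_union_of_adj : ∀ a ∈ D, ∀ b, G.Adj a b → b ∈ D ∪ S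

/-- Some edge of `G` joins the vertex sets `A` and `B`. -/
def Touches (G : SimpleGraph V) (A B : Set V) : Prop :=
  ∃ a ∈ A, ∃ b ∈ B, G.Adj a b

/-- `A` and `B` are *linked*: disjoint, but joined by an edge, as two branch sets of a minor that
correspond to adjacent vertices must be. -/
def Linked (G : SimpleGraph V) (A B : Set V) : Prop :=
  Disjoint A B ∧ Touches G A B

section Components

variable {G : SimpleGraph V} {S A B C D D' : Set V}

theorem Touches.symm (h : Touches G A B) : Touches G B A := by
  obtain ⟨a, ha, b, hb, hab⟩ := h
  exact ⟨b, hb, a, ha, hab.symm⟩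

theorem Touches.mono (h : Touches G A B) (hA : A ⊆ C) (hB : B ⊆ D) : Touches G C D := by
  obtain ⟨a, ha, b, hb, hab⟩ := h
  exact ⟨a, hA ha, b, hB hb, hab⟩

theorem Touches.connected_union (h : Touches G A B) (hA : (G.induce A).Connected)
    (hB : (G.induce B).Connected) : (G.induce (A ∪ B)).Connected := by
  obtain ⟨a, ha, b, hb, hab⟩ := h
  exact connected_induce_union hA.preconnected hB.preconnected ha hb hab

instance : Std.Symm (Linked G) where
  symm _ _ h := ⟨h.1.symm, h.2.symm⟩

theorem exists_isComponent_mem {v : V} (hv : v ∉ S) : ∃ D, IsComponent G S D ∧ v ∈ D := by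
  let c := (G.induce Sᶜ).connectedComponentMk ⟨v, hv⟩
  refine ⟨Subtype.val '' c.supp, ⟨?_, ?_, ?_⟩, ⟨v, hv⟩, rfl, rfl⟩
  · let φ : c.toSimpleGraph →g G.induce (Subtype.val '' c.supp) :=
      ⟨fun u => ⟨u.1.1, u.1, u.2, rfl⟩, fun h => h⟩
    exact c.connected_toSimpleGraph.map φ fun ⟨_, u, hu, hu'⟩ => ⟨⟨u, hu⟩, Subtype.ext hu'⟩
  · exact Set.disjoint_left.2 fun _ ⟨w, _, hw⟩ => hw ▸ w.2
  · rintro _ ⟨a, ha, rfl⟩ b hab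
    by_cases hb : b ∈ S
    · exact .inr hb
    · exact .inl ⟨⟨b, hb⟩, c.mem_supp_of_adj_mem_supp ha hab, rfl⟩

theorem IsComponent.subset_of_mem (hD : IsComponent G S D)
    (hA : ∀ a ∈ A, ∀ b, G.Adj a b → b ∈ A ∪ S) {v : V} (hv : v ∈ D) (hvA : v ∈ A) : D ⊆ A := by
  intro w hw
  by_contra hwA
  obtain ⟨p⟩ := hD.connected ⟨v, hv⟩ ⟨w, hw⟩
  obtain ⟨d, -, hd, hd'⟩ := p.exists_boundary_dart (Subtype.val ⁻¹' A) hvA hwA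
  rcases hA _ hd _ d.adj with h | h
  exacts [hd' h, Set.disjoint_left.1 hD.disjoint d.snd.2 h]

theorem IsComponent.eq_of_mem (hD : IsComponent G S D) (hD' : IsComponent G S D') {v : V}
    (hv : v ∈ D) (hv' : v ∈ D') : D = D' :=
  (hD.subset_of_mem hD'.mem_union_of_adj hv hv').antisymm
    (hD'.subset_of_mem hD.mem_union_of_adj hv' hv)

theorem IsComponent.touches_singleton {z : V} (hD : IsComponent G (insert z S) D)
    (hz : z ∉ S) (hS : ¬ Separates G S) : Touches G D {z} := by
  by_contra hn
  refine hS ⟨D, Set.nonempty_coe_sort.1 hD.connected.nonempty,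
    hD.disjoint.mono_right (Set.subset_insert z S), fun a ha b hab => ?_, z, ?_⟩
  · rcases hD.mem_union_of_adj a ha b hab with h | rfl | h
    exacts [.inl h, (hn ⟨a, ha, b, rfl, hab⟩).elim, .inr h]
  · rintro (h | h)
    exacts [Set.disjoint_left.1 hD.disjoint h (Set.mem_insert z S), hz h]

end Components

section Minors

variable {U W : Type*} {G : SimpleGraph V} {H : SimpleGraph W} {K : SimpleGraph U}

theorem connected_induce_biUnion {s : Set W} {f : W → Set V} (hs : (H.induce s).Connected)
    (hf : ∀ w, (G.induce (f w)).Connected)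
    (hadj : ∀ w w', H.Adj w w' → Touches G (f w) (f w')) :
    (G.induce (⋃ w ∈ s, f w)).Connected := by
  obtain ⟨w₀⟩ := hs.nonempty
  obtain ⟨u₀, hu₀⟩ := (hf w₀).nonempty
  have hsub (w : s) : f w ⊆ ⋃ w ∈ s, f w := Set.subset_biUnion_of_mem w.2
  have hpatch (w : s) {u v : V} (hu : u ∈ f w) (hv : v ∈ f w) :
      (G.induce (⋃ w ∈ s, f w)).Reachable ⟨u, hsub w hu⟩ ⟨v, hsub w hv⟩ :=
    ((hf w) ⟨u, hu⟩ ⟨v, hv⟩).map (G.induceHomOfLE (hsub w)).toHom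
  have hreach (w : s) : ∀ v (hv : v ∈ f w),
      (G.induce (⋃ w ∈ s, f w)).Reachable ⟨u₀, hsub w₀ hu₀⟩ ⟨v, hsub w hv⟩ := by
    have := (reachable_iff_reflTransGen w₀ w).1 (hs w₀ w)
    induction this with
    | refl => exact fun v hv => hpatch w₀ hu₀ hv
    | @tail w w' _ hww' ih =>
      intro v hv
      obtain ⟨a, ha, b, hb, hab⟩ := hadj w w' hww'
      have hab' : (G.induce (⋃ w ∈ s, f w)).Adj ⟨a, hsub w ha⟩ ⟨b, hsub w' hb⟩ := hab
      exact (ih a ha).trans (hab'.reachable.trans (hpatch w' hb hv))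
  refine (connected_iff_exists_forall_reachable _).2 ⟨⟨u₀, hsub w₀ hu₀⟩, fun ⟨v, hv⟩ => ?_⟩
  obtain ⟨w, hw, hvw⟩ := Set.mem_iUnion₂.1 hv
  exact hreach ⟨w, hw⟩ v hvw

theorem HasMinor.trans (hGH : HasMinor G H) (hHK : HasMinor H K) : HasMinor G K := by
  obtain ⟨f, hf, hfdisj, hfadj⟩ := hGH
  obtain ⟨g, hg, hgdisj, hgadj⟩ := hHK
  refine ⟨fun u => ⋃ w ∈ g u, f w, fun u => connected_induce_biUnion (hg u) hf hfadj, ?_, ?_⟩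
  · intro u u' huu'
    simp only [Set.disjoint_iUnion_left, Set.disjoint_iUnion_right]
    exact fun w hw w' hw' => hfdisj w' w ((hgdisj u u' huu').ne_of_mem hw' hw)
  · intro u u' huu'
    obtain ⟨w, hw, w', hw', hww'⟩ := hgadj u u' huu'
    exact Touches.mono (hfadj w w' hww') (Set.subset_biUnion_of_mem hw)
      (Set.subset_biUnion_of_mem hw')

theorem IsPlanar.of_hasMinor (hG : IsPlanar G) (hGH : HasMinor G H) : IsPlanar H :=
  ⟨fun h => hG.1 (hGH.trans h), fun h => hG.2 (hGH.trans h)⟩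

theorem hasMinor_completeGraph {ι : Type*} {f : ι → Set V} (hf : ∀ i, (G.induce (f i)).Connected)
    (hff : Pairwise (Function.onFun (Linked G) f)) : HasMinor G (completeGraph ι) :=
  ⟨f, hf, fun _ _ hij => (hff hij).1, fun _ _ hij => (hff hij).2⟩

theorem hasMinor_completeBipartiteGraph {ι κ : Type*} {A : ι → Set V} {B : κ → Set V}
    (hA : ∀ i, (G.induce (A i)).Connected) (hB : ∀ i, (G.induce (B i)).Connected)
    (hAA : Pairwise (Function.onFun Disjoint A)) (hBB : Pairwise (Function.onFun Disjoint B))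
    (hAB : ∀ i j, Linked G (A i) (B j)) :
    HasMinor G (completeBipartiteGraph ι κ) := by
  refine ⟨Sum.elim A B, ?_, ?_, ?_⟩
  · rintro (i | i)
    exacts [hA i, hB i]
  · rintro (i | i) (j | j) hij
    · exact hAA fun h => hij (congrArg _ h)
    · exact (hAB i j).1
    · exact (hAB j i).1.symm
    · exact hBB fun h => hij (congrArg _ h)
  · rintro (i | i) (j | j) hij
    · simp at hij
    · exact (hAB i j).2
    · exact (hAB j i).2.symm
    · simp at hij

end Minors

section Obstructions

variable {G : SimpleGraph V}

theorem linked_singleton {x y : V} (hxy : G.Adj x y) : Linked G {x} {y} :=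
  ⟨Set.disjoint_singleton.2 hxy.ne, x, rfl, y, rfl, hxy⟩

theorem IsPlanar.not_linked_triangle (hG : IsPlanar G) {x y : V} (hxy : G.Adj x y)
    {X : Fin 3 → Set V} (hX : ∀ i, (G.induce (X i)).Connected)
    (hx : ∀ i, Linked G {x} (X i)) (hy : ∀ i, Linked G {y} (X i)) :
    ¬ ∀ i, Linked G (X i) (X (i + 1)) := by
  intro h
  refine hG.1 (hasMinor_completeGraph (f := ![{x}, {y}, X 0, X 1, X 2]) ?_ ?_)
  · simp [Fin.forall_fin_succ, hX]
  · simpa [pairwise_fin_succ_iff_of_isSymm, Fin.forall_fin_succ] using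
      ⟨⟨linked_singleton hxy, hx 0, hx 1, hx 2⟩, ⟨hy 0, hy 1, hy 2⟩, ⟨h 0, symm (h 2)⟩, h 1⟩

end Obstructions

/-- The set `A` enlarged by the components of `G - S` that touch both `A` and `B`. -/
def absorb (G : SimpleGraph V) (S A B : Set V) : Set V :=
  A ∪ ⋃₀ {D | IsComponent G S D ∧ Touches G D A ∧ Touches G D B}

section Absorb

variable {G : SimpleGraph V} {S A B C E T : Set V}

theorem subset_absorb : A ⊆ absorb G S A B := Set.subset_union_left

theorem IsComponent.subset_absorb {D : Set V} (hD : IsComponent G S D) (hDA : Touches G D A)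
    (hDB : Touches G D B) : D ⊆ absorb G S A B :=
  fun _ hv => .inr ⟨D, ⟨hD, hDA, hDB⟩, hv⟩

theorem connected_absorb (hA : (G.induce A).Connected) :
    (G.induce (absorb G S A B)).Connected := by
  obtain ⟨a, ha⟩ := hA.nonempty
  refine induce_connected_of_patches a (subset_absorb ha) fun {v} hv => ?_
  rcases hv with hv | ⟨D, ⟨hD, hDA, hDB⟩, hv⟩
  · exact ⟨A, subset_absorb, ha, hv, hA _ _⟩
  · exact ⟨A ∪ D, Set.union_subset subset_absorb (hD.subset_absorb hDA hDB), .inl ha, .inr hv,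
      hDA.symm.connected_union hA hD.connected _ _⟩

theorem disjoint_absorb_left (hC : C ⊆ S) (hAC : Disjoint A C) :
    Disjoint (absorb G S A B) C := by
  refine Set.disjoint_union_left.2 ⟨hAC, Set.disjoint_sUnion_left.2 ?_⟩
  exact fun D hD => hD.1.disjoint.mono_right hC

theorem disjoint_absorb (hA : A ⊆ S) (hC : C ⊆ S) (hAC : Disjoint A C)
    (h : ∀ D, IsComponent G S D → Touches G D A → Touches G D B → Touches G D C →
      ¬ Touches G D E) :
    Disjoint (absorb G S A B) (absorb G S C E) := by
  refine Set.disjoint_union_right.2 ⟨disjoint_absorb_left hC hAC, ?_⟩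
  refine Set.disjoint_sUnion_right.2 fun D ⟨hD, hDC, hDE⟩ => ?_
  refine Set.disjoint_union_left.2 ⟨(hD.disjoint.mono_right hA).symm, ?_⟩
  refine Set.disjoint_sUnion_left.2 fun D' ⟨hD', hDA, hDB⟩ => Set.disjoint_left.2 fun v hv' hv => ?_
  obtain rfl := hD.eq_of_mem hD' hv hv'
  exact h D hD hDA hDB hDC hDE

theorem touches_absorb (hA : A.Nonempty) (hB : B.Nonempty) (hAB : Disjoint A B)
    (hAT : Disjoint A T) (hBT : Disjoint B T) (hT : ¬ Separates G T) :
    Touches G (absorb G (A ∪ B ∪ T) A B) B := by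
  by_contra hn
  have hABn : ∀ a ∈ A, ∀ b ∈ B, ¬ G.Adj a b :=
    fun a ha b hb hab => hn ⟨a, subset_absorb ha, b, hb, hab⟩
  have hcomp : ∀ D, IsComponent G (A ∪ B ∪ T) D → Touches G D A → ¬ Touches G D B :=
    fun D hD hDA hDB => hn (hDB.mono (hD.subset_absorb hDA hDB) subset_rfl)
  obtain ⟨o, ho⟩ := hB
  refine hT ⟨absorb G (A ∪ B ∪ T) A A, hA.mono subset_absorb,
    disjoint_absorb_left (by grind) hAT, ?_, o, ?_⟩
  · rintro a (ha | ⟨D, ⟨hD, hDA, -⟩, ha⟩) b hab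
    · by_cases hb : b ∈ A ∪ B ∪ T
      · rcases hb with (hb | hb) | hb
        exacts [.inl (subset_absorb hb), (hABn a ha b hb hab).elim, .inr hb]
      · obtain ⟨D, hD, hbD⟩ := exists_isComponent_mem hb
        have hDA : Touches G D A := ⟨b, hbD, a, ha, hab.symm⟩
        exact .inl (.inr ⟨D, ⟨hD, hDA, hDA⟩, hbD⟩)
    · rcases hD.mem_union_of_adj a ha b hab with hb | (hb | hb) | hb
      exacts [.inl (.inr ⟨D, ⟨hD, hDA, hDA⟩, hb⟩), .inl (subset_absorb hb),
        (hcomp D hD hDA ⟨a, ha, b, hb, hab⟩).elim, .inr hb]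
  · rintro (ho' | ho')
    · exact Set.disjoint_left.1 (disjoint_absorb_left (by grind) hAB) ho' ho
    · exact Set.disjoint_left.1 hBT ho ho'

end Absorb

section Obstructions

variable {G : SimpleGraph V}

theorem IsPlanar.not_three_linked_sets (hG : IsPlanar G) {A B : Fin 3 → Set V}
    (hA : ∀ i, (G.induce (A i)).Connected) (hB : ∀ i, (G.induce (B i)).Connected)
    (hAA : ∀ i, Disjoint (A i) (A (i + 1))) (hBB : ∀ i, Disjoint (B i) (B (i + 1))) :
    ¬ ∀ i j, Linked G (A i) (B j) := by
  have hpairwise {F : Fin 3 → Set V} (hF : ∀ i, Disjoint (F i) (F (i + 1))) :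
      Pairwise (Function.onFun Disjoint F) := by
    have h0 := hF 0
    have h1 := hF 1
    have h2 := (hF 2).symm
    simpa [pairwise_fin_succ_iff_of_isSymm, Fin.forall_fin_succ] using ⟨⟨h0, h2⟩, h1⟩
  exact fun h => hG.2 (hasMinor_completeBipartiteGraph hA hB (hpairwise hAA) (hpairwise hBB) h)

theorem IsPlanar.not_forall_linked (hG : IsPlanar G) {x y : V} (hxy : x ≠ y) {D : Set V}
    {X : Fin 3 → Set V} (hD : (G.induce D).Connected) (hX : ∀ i, (G.induce (X i)).Connected)
    (hxD : x ∉ D) (hyD : y ∉ D) (hXX : ∀ i, Disjoint (X i) (X (i + 1)))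
    (hx : ∀ i, Linked G {x} (X i)) (hy : ∀ i, Linked G {y} (X i)) :
    ¬ ∀ i, Linked G D (X i) := by
  intro hDX
  refine hG.not_three_linked_sets (A := ![{x}, {y}, D]) ?_ hX ?_ hXX ?_
  · simp [Fin.forall_fin_succ, hD]
  · simp [Fin.forall_fin_succ, hxy, hxD, hyD]
  · intro i
    fin_cases i
    exacts [hx, hy, hDX]

/-- The alternative is a `K₃,₃` or a `K₅` minor, depending on whether some component of the rest
of the graph touches all three sets. -/
theorem IsPlanar.exists_separates (hG : IsPlanar G) {x y : V} (hxy : G.Adj x y)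
    {X : Fin 3 → Set V} (hX : ∀ i, (G.induce (X i)).Connected)
    (hXX : ∀ i, Disjoint (X i) (X (i + 1)))
    (hx : ∀ i, Linked G {x} (X i)) (hy : ∀ i, Linked G {y} (X i)) :
    ∃ i, Separates G ({x, y} ∪ X i) := by
  by_contra! hsep
  set S : Set V := {x, y} ∪ ⋃ i, X i with hS
  have hXS (i) : X i ⊆ S := (Set.subset_iUnion X i).trans Set.subset_union_right
  have hxS : {x} ⊆ S := by simp [hS]
  have hyS : {y} ⊆ S := by simp [hS]
  have hne (i) : (X i).Nonempty := Set.nonempty_coe_sort.1 (hX i).nonempty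
  have hxyX (i) : Disjoint (X i) {x, y} :=
    Set.disjoint_union_right.2 ⟨(hx i).1.symm, (hy i).1.symm⟩
  have hcomp (D) (hD : IsComponent G S D) : ¬ ∀ i, Touches G D (X i) := fun hDX =>
    hG.not_forall_linked hxy.ne hD.connected hX (Set.disjoint_right.1 hD.disjoint (hxS rfl))
      (Set.disjoint_right.1 hD.disjoint (hyS rfl)) hXX hx hy
      fun i => ⟨hD.disjoint.mono_right (hXS i), hDX i⟩
  refine hG.not_linked_triangle hxy (X := fun i => absorb G S (X i) (X (i + 1)))
    (fun i => connected_absorb (hX i)) (fun i => ⟨?_, ?_⟩) (fun i => ⟨?_, ?_⟩) fun i => ⟨?_, ?_⟩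
  · exact (disjoint_absorb_left hxS (hx i).1.symm).symm
  · exact (hx i).2.mono subset_rfl subset_absorb
  · exact (disjoint_absorb_left hyS (hy i).1.symm).symm
  · exact (hy i).2.mono subset_rfl subset_absorb
  · refine disjoint_absorb (hXS i) (hXS _) (hXX i) fun D hD h0 h1 _ h2 => hcomp D hD fun j => ?_
    obtain rfl | rfl | rfl : j = i ∨ j = i + 1 ∨ j = i + 1 + 1 := by omega
    exacts [h0, h1, h2]
  · have hSX : S = X i ∪ X (i + 1) ∪ ({x, y} ∪ X (i + 1 + 1)) := by
      have : ⋃ i, X i = X i ∪ X (i + 1) ∪ X (i + 1 + 1) := by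
        ext v
        fin_cases i <;> simp [Fin.exists_fin_succ] <;> tauto
      rw [hS, this, Set.union_left_comm]
    have hi : i + 1 + 1 + 1 = i := by omega
    have hXi : Disjoint (X i) (X (i + 1 + 1)) := (hi ▸ hXX (i + 1 + 1)).symm
    rw [hSX]
    exact (touches_absorb (hne i) (hne _) (hXX i) (Set.disjoint_union_right.2 ⟨hxyX i, hXi⟩)
      (Set.disjoint_union_right.2 ⟨hxyX _, hXX _⟩) (hsep _)).mono subset_rfl subset_absorb

end Obstructions

/-- The path `x, a, b, y` (with `a = b` allowed) closes up with the edge `xy` to an induced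
nonseparating cycle of length three or four; such cycles bound faces. -/
structure IsPeripheralPair (G : SimpleGraph V) (x y a b : V) : Prop where
  adj_left : G.Adj x a
  adj_right : G.Adj y b
  left_ne : a ≠ y
  right_ne : b ≠ x
  eq_or_adj : a = b ∨ G.Adj a b ∧ ¬ G.Adj x b ∧ ¬ G.Adj y a
  not_separates : ¬ Separates G {x, y, a, b}

section PeripheralPairs

variable {G : SimpleGraph V} {x y a b a' b' : V}

theorem IsPeripheralPair.symm (h : IsPeripheralPair G x y a b) : IsPeripheralPair G y x b a where
  adj_left := h.adj_right
  adj_right := h.adj_left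
  left_ne := h.right_ne
  right_ne := h.left_ne
  eq_or_adj := h.eq_or_adj.imp Eq.symm fun ⟨hab, hx, hy⟩ => ⟨hab.symm, hy, hx⟩
  not_separates := by
    rw [Set.insert_comm, Set.pair_comm b a]
    exact h.not_separates

theorem IsPeripheralPair.connected (h : IsPeripheralPair G x y a b) :
    (G.induce {a, b}).Connected := by
  rcases h.eq_or_adj with rfl | ⟨hab, -⟩
  · rw [Set.pair_eq_singleton]
    simp
  · exact induce_pair_connected_of_adj hab

theorem IsPeripheralPair.linked_left (h : IsPeripheralPair G x y a b) : Linked G {x} {a, b} :=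
  ⟨by simpa using ⟨h.adj_left.ne, h.right_ne.symm⟩, x, rfl, a, by simp, h.adj_left⟩

theorem IsPeripheralPair.linked_right (h : IsPeripheralPair G x y a b) : Linked G {y} {a, b} :=
  Set.pair_comm b a ▸ h.symm.linked_left

theorem IsPeripheralPair.eq_of_adj (h : IsPeripheralPair G x y a b) (hxb : G.Adj x b) : a = b :=
  h.eq_or_adj.resolve_right fun h' => h'.2.1 hxb

/-- Two different cycles `x, a, b, y` and `x, a, b', y` would leave a component `D` of the rest of
the graph attached to `x`, `b` and `b'`, which gives a `K₃,₃` minor together with `y` and `a`. -/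
theorem IsPeripheralPair.right_unique [Finite V] (hG : IsPlanar G) (h3 : IsKConnected 3 G)
    (hxy : G.Adj x y) (h : IsPeripheralPair G x y a b) (h' : IsPeripheralPair G x y a b') :
    b = b' := by
  by_contra hbb'
  obtain ⟨hab, hxb, hya⟩ : G.Adj a b ∧ ¬ G.Adj x b ∧ ¬ G.Adj y a := by
    refine h.eq_or_adj.resolve_left ?_
    rintro rfl
    exact hbb' (h'.symm.eq_of_adj h.adj_right).symm
  obtain ⟨hab', hxb', -⟩ : G.Adj a b' ∧ ¬ G.Adj x b' ∧ ¬ G.Adj y a := by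
    refine h'.eq_or_adj.resolve_left ?_
    rintro rfl
    exact hbb' (h.symm.eq_of_adj h'.adj_right)
  obtain ⟨c, hcy, hca, hxc⟩ := h3.exists_adj_notMem_pair hxy.ne h.adj_left.ne
  obtain ⟨D, hD, hcD⟩ : ∃ D, IsComponent G {b, x, y, a, b'} D ∧ c ∈ D := by
    refine exists_isComponent_mem ?_
    rintro (rfl | rfl | rfl | rfl | rfl)
    exacts [hxb hxc, hxc.ne rfl, hcy rfl, hca rfl, hxb' hxc]
  have hDS := Set.disjoint_right.1 hD.disjoint
  have hDb : Touches G D {b} := hD.touches_singleton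
    (by simp [hbb', h.right_ne, h.adj_right.ne', hab.ne']) h'.not_separates
  have hDb' : Touches G D {b'} := by
    rw [show ({b, x, y, a, b'} : Set V) = {b', x, y, a, b} by grind] at hD
    exact hD.touches_singleton
      (by simp [Ne.symm hbb', h'.right_ne, h'.adj_right.ne', hab'.ne']) h.not_separates
  refine hG.not_forall_linked (x := y) (y := a) (D := D) (X := ![{x}, {b}, {b'}]) h.left_ne.symm
    hD.connected ?_ (hDS (by simp)) (hDS (by simp)) ?_ ?_ ?_ ?_
  · simp [Fin.forall_fin_succ]
  · simp [Fin.forall_fin_succ, h.right_ne.symm, hbb', h'.right_ne]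
  · simpa [Fin.forall_fin_succ] using ⟨linked_singleton hxy.symm, linked_singleton h.adj_right,
      linked_singleton h'.adj_right⟩
  · simpa [Fin.forall_fin_succ] using ⟨linked_singleton h.adj_left.symm, linked_singleton hab,
      linked_singleton hab'⟩
  · have hDx : Touches G D {x} := ⟨c, hcD, x, rfl, hxc.symm⟩
    simpa [Fin.forall_fin_succ, Linked, hDx, hDb, hDb'] using
      ⟨hDS (by simp), hDS (by simp), hDS (by simp)⟩

theorem IsPeripheralPair.disjoint [Finite V] (hG : IsPlanar G) (h3 : IsKConnected 3 G)
    (hxy : G.Adj x y) (h : IsPeripheralPair G x y a b) (h' : IsPeripheralPair G x y a' b')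
    (hne : (a, b) ≠ (a', b')) : Disjoint ({a, b} : Set V) {a', b'} := by
  have ha : a ≠ a' := by
    rintro rfl
    exact hne (by rw [h.right_unique hG h3 hxy h'])
  have hb : b ≠ b' := by
    rintro rfl
    exact hne (by rw [h.symm.right_unique hG h3 hxy.symm h'.symm])
  have hab' : a ≠ b' := by
    rintro rfl
    exact ha (h'.eq_of_adj h.adj_left).symm
  have hba' : b ≠ a' := by
    rintro rfl
    exact ha (h.eq_of_adj h'.adj_left)
  simp [ha.symm, hb.symm, hab'.symm, hba'.symm]

theorem ncard_isPeripheralPair_le_two [Finite V] (hG : IsPlanar G) (h3 : IsKConnected 3 G)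
    (hxy : G.Adj x y) : {p : V × V | IsPeripheralPair G x y p.1 p.2}.ncard ≤ 2 := by
  by_contra! hcard
  obtain ⟨p, q, r, hp, hq, hr, hpq, hpr, hqr⟩ := (Set.two_lt_ncard_iff (Set.toFinite _)).1 hcard
  let F : Fin 3 → V × V := ![p, q, r]
  have hF : ∀ i, IsPeripheralPair G x y (F i).1 (F i).2 := by
    intro i; fin_cases i; exacts [hp, hq, hr]
  have hFF : ∀ i, F i ≠ F (i + 1) := by
    intro i; fin_cases i; exacts [hpq, hqr, hpr.symm]
  obtain ⟨i, hi⟩ := hG.exists_separates hxy (fun i => (hF i).connected)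
    (fun i => (hF i).disjoint hG h3 hxy (hF (i + 1)) (hFF i))
    (fun i => (hF i).linked_left) fun i => (hF i).linked_right
  exact (hF i).not_separates (by simpa only [Set.insert_union, Set.singleton_union] using hi)

end PeripheralPairs

section ContractibleEdge

variable {G : SimpleGraph V} {S A : Set V} {x y z : V}

theorem IsFragment.exists_notMem_of_adj (hA : IsFragment G S A) (hxy : G.Adj x y) :
    ∃ B, IsFragment G S B ∧ x ∉ B ∧ y ∉ B := by
  by_cases h : x ∉ A ∧ y ∉ A
  · exact ⟨A, hA, h⟩
  · refine ⟨_, hA.compl, ?_⟩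
    have h1 := hA.mem_union_of_adj x
    have h2 := hA.mem_union_of_adj y
    have := hxy.symm
    simp only [Set.mem_compl_iff, not_not]
    grind

/-- Thomassen's descent: an edge from `z` into `A` is separating together with some vertex, and
one side of that separation cuts a smaller fragment out of `A`. -/
theorem IsFragment.exists_ssubset [Finite V] (h3 : IsKConnected 3 G)
    (hsep : ∀ x y, G.Adj x y → ∃ z, Separates G {x, y, z}) (hxy : G.Adj x y)
    (hA : IsFragment G {z, x, y} A) :
    ∃ B ⊂ A, ∃ x' y' z', G.Adj x' y' ∧ IsFragment G {z', x', y'} B := by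
  obtain ⟨v, hvA, hzv⟩ := hA.exists_adj_of_not_separates (h3.not_separates_pair x y)
  obtain ⟨w, B, hB⟩ := hsep z v hzv
  obtain ⟨B, hB, hxB, hyB⟩ := hB.exists_notMem_of_adj hxy
  obtain ⟨b, hbB, hvb⟩ : ∃ b ∈ B, G.Adj v b := by
    rw [Set.insert_comm] at hB
    exact hB.exists_adj_of_not_separates (h3.not_separates_pair z w)
  have hBS := Set.disjoint_left.1 hB.disjoint
  have hzB : z ∉ B := fun h => hBS h (by simp)
  have hvB : v ∉ B := fun h => hBS h (by simp)
  have hmem {c : V} (hcA : c ∈ A ∪ {z, x, y}) (hcB : c ∈ B) : c ∈ B ∩ A := by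
    rcases hcA with h | rfl | rfl | rfl
    exacts [⟨hcB, h⟩, (hzB hcB).elim, (hxB hcB).elim, (hyB hcB).elim]
  refine ⟨B ∩ A, ⟨Set.inter_subset_right, fun h => hvB (h hvA).1⟩, z, v, w, hzv, ?_⟩
  rw [show ({w, z, v} : Set V) = {z, v, w} by grind]
  refine ⟨⟨b, hmem (hA.mem_union_of_adj v hvA b hvb) hbB⟩, ?_, ?_, ?_⟩
  · exact hB.disjoint.mono_left Set.inter_subset_left
  · rintro a ⟨haB, haA⟩ c hac
    exact (hB.mem_union_of_adj a haB c hac).imp_left (hmem (hA.mem_union_of_adj a haA c hac))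
  · obtain ⟨o, ho⟩ := hB.exists_notMem
    exact ⟨o, fun h => ho (h.imp_left And.left)⟩

theorem IsKConnected.exists_not_separates [Finite V] (h3 : IsKConnected 3 G) :
    ∃ x y, G.Adj x y ∧ ∀ z, ¬ Separates G {x, y, z} := by
  by_contra! hsep
  have no_fragment (A : Set V) : ¬ ∃ x y z, G.Adj x y ∧ IsFragment G {z, x, y} A := by
    induction A using WellFoundedLT.induction with
    | ind A ih =>
      rintro ⟨x, y, z, hxy, hA⟩
      obtain ⟨B, hBA, hB⟩ := hA.exists_ssubset h3 hsep hxy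
      exact ih B hBA hB
  obtain ⟨x, -⟩ := exists_notMem_of_ncard_lt_card (S := (∅ : Set V))
    (by simpa using (Nat.zero_le 3).trans_lt (isKConnected_iff.1 h3).1)
  obtain ⟨a, ha⟩ := exists_notMem_of_ncard_lt_card (S := {x})
    (by simpa using (by decide : 1 < 3).trans (isKConnected_iff.1 h3).1)
  have hxa : x ≠ a := Ne.symm ha
  obtain ⟨y, -, -, hxy⟩ := h3.exists_adj_notMem_pair hxa hxa
  obtain ⟨z, A, hA⟩ := hsep x y hxy
  rw [show ({x, y, z} : Set V) = {z, x, y} by grind] at hA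
  exact no_fragment A ⟨x, y, z, hxy, hA⟩

end ContractibleEdge

/-- `π` is the quotient map contracting the edge `xy` of `G`; the contracted graph is
`G.map π`. -/
structure IsEdgeContraction {W : Type*} (G : SimpleGraph V) (x y : V) (π : V → W) : Prop where
  adj : G.Adj x y
  surjective : Function.Surjective π
  eq_iff : ∀ u v, π u = π v ↔ u = v ∨ s(u, v) = s(x, y)

theorem exists_isEdgeContraction {G : SimpleGraph V} {x y : V} (hxy : G.Adj x y) :
    ∃ π : V → {v // v ≠ y}, IsEdgeContraction G x y π := by
  classical
  refine ⟨fun v => if hv : v = y then ⟨x, hxy.ne⟩ else ⟨v, hv⟩, hxy, fun v => ⟨v, ?_⟩,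
    fun u v => ?_⟩
  · simp [v.2]
  · have := hxy.ne
    split_ifs <;> grind [Sym2.eq_iff]

namespace IsEdgeContraction

variable {W : Type*} {G : SimpleGraph V} {x y a b : V} {π : V → W}

theorem symm (h : IsEdgeContraction G x y π) : IsEdgeContraction G y x π where
  adj := h.adj.symm
  surjective := h.surjective
  eq_iff u v := by rw [h.eq_iff, Sym2.eq_swap (a := y)]

theorem map_eq (h : IsEdgeContraction G x y π) : π x = π y :=
  (h.eq_iff x y).2 (.inr rfl)

theorem injOn (h : IsEdgeContraction G x y π) : Set.InjOn π {y}ᶜ := by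
  intro u hu v hv huv
  have := (h.eq_iff u v).1 huv
  grind [Sym2.eq_iff]

theorem map_eq_left_iff (h : IsEdgeContraction G x y π) : π a = π x ↔ a = x ∨ a = y := by
  rw [h.eq_iff]
  grind [Sym2.eq_iff]

theorem map_ne_left_iff (h : IsEdgeContraction G x y π) : π a ≠ π x ↔ a ≠ x ∧ a ≠ y := by
  rw [ne_eq, h.map_eq_left_iff, not_or]

theorem map_eq_iff (h : IsEdgeContraction G x y π) (hx : a ≠ x) (hy : a ≠ y) :
    π a = π b ↔ a = b := by
  rw [h.eq_iff]
  grind [Sym2.eq_iff]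

theorem natCard_add_one [Finite V] (h : IsEdgeContraction G x y π) :
    Nat.card W + 1 = Nat.card V := by
  have himage : π '' {y}ᶜ = Set.univ := by
    refine Set.eq_univ_of_forall fun w => ?_
    obtain ⟨v, rfl⟩ := h.surjective w
    by_cases hv : v = y
    · exact ⟨x, h.adj.ne, hv ▸ h.map_eq⟩
    · exact ⟨v, hv, rfl⟩
  rw [← Set.ncard_univ, ← himage, h.injOn.ncard_image,
    ← Set.ncard_singleton y, add_comm, Set.ncard_add_ncard_compl]

theorem map_adj_left_iff (h : IsEdgeContraction G x y π) (hx : a ≠ x) (hy : a ≠ y) :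
    (G.map π).Adj (π x) (π a) ↔ G.Adj x a ∨ G.Adj y a := by
  constructor
  · rintro ⟨-, u, v, huv, hux, hva⟩
    obtain rfl := (h.map_eq_iff hx hy).1 hva.symm
    rcases h.map_eq_left_iff.1 hux with rfl | rfl
    exacts [.inl huv, .inr huv]
  · have hne : π x ≠ π a := fun e => hx ((h.map_eq_iff hx hy).1 e.symm)
    rintro (hxa | hya)
    exacts [⟨hne, x, a, hxa, rfl, rfl⟩, ⟨hne, y, a, hya, h.map_eq.symm, rfl⟩]

theorem map_adj_iff (h : IsEdgeContraction G x y π) (hax : a ≠ x) (hay : a ≠ y) (hbx : b ≠ x)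
    (hby : b ≠ y) : (G.map π).Adj (π a) (π b) ↔ G.Adj a b := by
  constructor
  · rintro ⟨-, u, v, huv, hua, hvb⟩
    obtain rfl := (h.map_eq_iff hax hay).1 hua.symm
    obtain rfl := (h.map_eq_iff hbx hby).1 hvb.symm
    exact huv
  · exact fun hab => ⟨fun e => hab.ne ((h.map_eq_iff hax hay).1 e), a, b, hab, rfl, rfl⟩

theorem hasMinor (h : IsEdgeContraction G x y π) : HasMinor G (G.map π) := by
  refine ⟨fun w => π ⁻¹' {w}, fun w => ?_, fun w₁ w₂ hw => ?_, ?_⟩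
  · obtain ⟨v, rfl⟩ := h.surjective w
    change (G.induce (π ⁻¹' {π v})).Connected
    by_cases hv : v = x ∨ v = y
    · have hfib : π ⁻¹' {π v} = {x, y} := by
        ext u
        rw [Set.mem_preimage, Set.mem_singleton_iff, h.map_eq_left_iff.2 hv, h.map_eq_left_iff]
        rfl
      rw [hfib]
      exact induce_pair_connected_of_adj h.adj
    · push Not at hv
      have hfib : π ⁻¹' {π v} = {v} := by
        ext u
        simp only [Set.mem_preimage, Set.mem_singleton_iff, eq_comm (b := π v),
          h.map_eq_iff hv.1 hv.2, eq_comm]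
      rw [hfib]
      simp
  · exact (Set.disjoint_singleton.2 hw).preimage π
  · rintro _ _ ⟨-, u, v, huv, rfl, rfl⟩
    exact ⟨u, rfl, v, rfl, huv⟩

theorem separates_preimage_iff (h : IsEdgeContraction G x y π) {S : Set W} :
    Separates G (π ⁻¹' S) ↔ Separates (G.map π) S := by
  have hfib {u v : V} (huv : π u = π v) : u = v ∨ G.Adj u v :=
    ((h.eq_iff u v).1 huv).imp_right fun e => by
      rw [← mem_edgeSet, e]
      exact h.adj
  constructor
  · rintro ⟨A, hA⟩
    have hsat {u : V} (hu : π u ∈ π '' A) : u ∈ A := by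
      obtain ⟨a, haA, hau⟩ := hu
      obtain rfl | hadj := hfib hau
      · exact haA
      · refine (hA.mem_union_of_adj a haA u hadj).resolve_right fun huS => ?_
        exact Set.disjoint_left.1 hA.disjoint haA (show π a ∈ S from hau ▸ huS)
    refine ⟨π '' A, hA.nonempty.image π, ?_, ?_, ?_⟩
    · rw [Set.disjoint_left]
      rintro _ ⟨a, haA, rfl⟩
      exact Set.disjoint_left.1 hA.disjoint haA
    · rintro w hw _ ⟨-, u, v, huv, rfl, rfl⟩
      exact (hA.mem_union_of_adj u (hsat hw) v huv).imp_left (Set.mem_image_of_mem π)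
    · obtain ⟨o, ho⟩ := hA.exists_notMem
      exact ⟨π o, fun h => ho (h.imp_left hsat)⟩
  · rintro ⟨A, hA⟩
    refine ⟨π ⁻¹' A, hA.nonempty.preimage h.surjective, hA.disjoint.preimage π, ?_, ?_⟩
    · intro a ha b hab
      by_cases he : π a = π b
      · exact .inl (he ▸ ha : π b ∈ A)
      · exact hA.mem_union_of_adj _ ha _ ⟨he, a, b, hab, rfl, rfl⟩
    · obtain ⟨o, ho⟩ := hA.exists_notMem
      obtain ⟨v, rfl⟩ := h.surjective o
      exact ⟨v, ho⟩

theorem preimage_pair_left (h : IsEdgeContraction G x y π) (c : V) :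
    π ⁻¹' {π x, π c} = {x, y, c} := by
  ext u
  have := h.eq_iff u c
  have := h.map_eq_left_iff (a := u)
  simp only [Set.mem_preimage, Set.mem_insert_iff, Set.mem_singleton_iff, h.map_eq_left_iff]
  grind [Sym2.eq_iff]

theorem isKConnected_three [Finite V] (h : IsEdgeContraction G x y π) (h3 : IsKConnected 3 G)
    (hcard : 5 ≤ Nat.card V) (hcon : ∀ z, ¬ Separates G {x, y, z}) :
    IsKConnected 3 (G.map π) := by
  have := Finite.of_surjective π h.surjective
  refine isKConnected_iff.2 ⟨by have := h.natCard_add_one; omega, fun S hS => ?_⟩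
  rw [← h.separates_preimage_iff]
  by_cases hx : π x ∈ S
  · obtain ⟨c, rfl⟩ : ∃ c, S = {π x, π c} := by
      have hle : (S \ {π x}).ncard ≤ 1 := by
        have := Set.ncard_sdiff_singleton_add_one hx
        omega
      have : Nonempty W := ⟨π x⟩
      obtain ⟨w, hw⟩ := (Set.ncard_le_one_iff_subset_singleton).1 hle
      rw [← Set.insert_sdiff_self_of_mem hx]
      rcases Set.subset_singleton_iff_eq.1 hw with h0 | h1
      · exact ⟨x, by rw [h0, Set.pair_eq_singleton, insert_empty_eq]⟩
      · obtain ⟨c, rfl⟩ := h.surjective w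
        exact ⟨c, by rw [h1]⟩
    rw [h.preimage_pair_left]
    exact hcon c
  · have hinj : Set.InjOn π (π ⁻¹' S) :=
      h.injOn.mono <| Set.subset_compl_singleton_iff.2 fun hy => hx (h.map_eq ▸ hy)
    refine (isKConnected_iff.1 h3).2 _ ?_
    rwa [← hinj.ncard_image, Set.image_preimage_eq S h.surjective]

end IsEdgeContraction

/-- The triangles of `G` whose vertex set does not separate `G`. For a `3`-connected planar graph
these are the triangular faces. -/
def nonseparatingTriangles (G : SimpleGraph V) : Set (Finset V) :=
  {T ∈ G.cliqueSet 3 | ¬ Separates G T}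

section Triangles

variable {G : SimpleGraph V} {a b c : V}

theorem isPeripheralPair_self_iff :
    IsPeripheralPair G a b c c ↔ G.Adj a c ∧ G.Adj b c ∧ ¬ Separates G {a, b, c} := by
  constructor
  · intro h
    exact ⟨h.adj_left, h.adj_right, by simpa using h.not_separates⟩
  · rintro ⟨ha, hb, hS⟩
    exact ⟨ha, hb, hb.ne', ha.ne', .inl rfl, by simpa using hS⟩

theorem ncard_isPeripheralPair_self_add_le_two [Finite V] (hG : IsPlanar G)
    (h3 : IsKConnected 3 G) (hab : G.Adj a b) :
    {c | IsPeripheralPair G a b c c}.ncard +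
      {p : V × V | IsPeripheralPair G a b p.1 p.2 ∧ p.1 ≠ p.2}.ncard ≤ 2 := by
  have hdiag : {c | IsPeripheralPair G a b c c}.ncard =
      ((fun c => (c, c)) '' {c | IsPeripheralPair G a b c c}).ncard :=
    (Set.ncard_image_of_injective _ fun c d h => congr_arg Prod.fst h).symm
  rw [hdiag, ← Set.ncard_union_eq]
  · refine le_trans (Set.ncard_le_ncard ?_) (ncard_isPeripheralPair_le_two hG h3 hab)
    rintro _ (⟨c, hc, rfl⟩ | hp)
    exacts [hc, hp.1]
  · rw [Set.disjoint_left]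
    rintro _ ⟨c, -, rfl⟩ ⟨-, hc⟩
    exact hc rfl

theorem mem_nonseparatingTriangles [DecidableEq V] (hab : G.Adj a b) (hac : G.Adj a c)
    (hbc : G.Adj b c) (hS : ¬ Separates G {a, b, c}) : {a, b, c} ∈ nonseparatingTriangles G :=
  ⟨is3Clique_iff.2 ⟨a, b, c, hab, hac, hbc, rfl⟩, by simpa using hS⟩

theorem exists_eq_insert_of_mem_cliqueSet_three [DecidableEq V] {T : Finset V}
    (hT : T ∈ G.cliqueSet 3) (ha : a ∈ T) :
    ∃ b c, G.Adj a b ∧ G.Adj a c ∧ G.Adj b c ∧ T = {a, b, c} := by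
  obtain ⟨u, v, w, huv, huw, hvw, rfl⟩ := is3Clique_iff.1 hT
  obtain rfl | rfl | rfl : a = u ∨ a = v ∨ a = w := by simpa using ha
  · exact ⟨v, w, huv, huw, hvw, rfl⟩
  · exact ⟨u, w, huv.symm, hvw, huw, by grind⟩
  · exact ⟨u, v, huw.symm, hvw.symm, huv, by grind⟩

theorem exists_eq_triple_of_mem_cliqueSet_three [DecidableEq V] {T : Finset V}
    (hT : T ∈ G.cliqueSet 3) (ha : a ∈ T) (hb : b ∈ T) (hab : a ≠ b) :
    ∃ c, G.Adj a b ∧ G.Adj a c ∧ G.Adj b c ∧ T = {a, b, c} := by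
  obtain ⟨c, d, hac, had, hcd, rfl⟩ := exists_eq_insert_of_mem_cliqueSet_three hT ha
  obtain rfl | rfl : b = c ∨ b = d := by simpa [hab.symm] using hb
  · exact ⟨d, hac, had, hcd, rfl⟩
  · exact ⟨c, had, hac, hcd.symm, by grind⟩

theorem ncard_nonseparatingTriangles_of_adj (hab : G.Adj a b) :
    {T ∈ nonseparatingTriangles G | a ∈ T ∧ b ∈ T}.ncard =
      {c | IsPeripheralPair G a b c c}.ncard := by
  classical
  refine Eq.symm (Set.ncard_congr (fun c _ => {a, b, c}) ?_ ?_ ?_)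
  · intro c hc
    obtain ⟨hac, hbc, hS⟩ := isPeripheralPair_self_iff.1 hc
    exact ⟨mem_nonseparatingTriangles hab hac hbc hS, by simp, by simp⟩
  · intro c d hc _ hcd
    have := hc.adj_left.ne
    have := hc.adj_right.ne
    have : c ∈ ({a, b, d} : Finset V) := hcd ▸ by simp
    grind
  · rintro T ⟨⟨hT, hS⟩, ha, hb⟩
    obtain ⟨c, -, hac, hbc, rfl⟩ := exists_eq_triple_of_mem_cliqueSet_three hT ha hb hab.ne
    exact ⟨c, isPeripheralPair_self_iff.2 ⟨hac, hbc, by simpa using hS⟩, rfl⟩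

end Triangles

namespace IsEdgeContraction

variable {W : Type*} {G : SimpleGraph V} {x y a b c d : V} {π : V → W}

theorem injOn_sym2Map (h : IsEdgeContraction G x y π) :
    Set.InjOn (Sym2.map π)
      (G.edgeSet \ insert s(x, y) ((fun c => s(y, c)) '' G.commonNeighbors x y)) := by
  set R := G.edgeSet \ insert s(x, y) ((fun c => s(y, c)) '' G.commonNeighbors x y)
  have hR {a b : V} (hab : s(a, b) ∈ R) : G.Adj a b ∧ s(a, b) ≠ s(x, y) ∧
      ∀ c, G.Adj x c → G.Adj y c → s(y, c) ≠ s(a, b) :=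
    ⟨hab.1, fun e => hab.2 (.inl e), fun c hx hy e => hab.2 (.inr ⟨c, ⟨hx, hy⟩, e⟩)⟩
  -- If `π` identifies two edges at a vertex, that vertex is adjacent to both `x` and `y`.
  have hinj {a b c d : V} (hab : s(a, b) ∈ R) (hcd : s(c, d) ∈ R) (hac : π a = π c)
      (hbd : π b = π d) : s(a, b) = s(c, d) := by
    have := hR hab
    have := hR hcd
    grind [h.eq_iff a c, h.eq_iff b d, Sym2.eq_iff, G.adj_comm, G.irrefl]
  rintro ⟨a, b⟩ hab ⟨c, d⟩ hcd hmap
  rcases Sym2.eq_iff.1 hmap with ⟨hac, hbd⟩ | ⟨had, hbc⟩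
  · exact hinj hab hcd hac hbd
  · exact (hinj hab (Sym2.eq_swap ▸ hcd) had hbc).trans Sym2.eq_swap

theorem ncard_edgeSet_le [Finite V] (h : IsEdgeContraction G x y π) :
    G.edgeSet.ncard ≤ (G.map π).edgeSet.ncard + 1 + (G.commonNeighbors x y).ncard := by
  have := Finite.of_surjective π h.surjective
  set K := (fun c => s(y, c)) '' G.commonNeighbors x y
  set R := G.edgeSet \ insert s(x, y) K
  have hmaps : Sym2.map π '' R ⊆ (G.map π).edgeSet := by
    rintro _ ⟨⟨a, b⟩, ⟨hab, hne⟩, rfl⟩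
    refine ⟨fun hπ => ?_, a, b, hab, rfl, rfl⟩
    rcases (h.eq_iff a b).1 hπ with rfl | he
    exacts [hab.ne rfl, hne (.inl he)]
  calc G.edgeSet.ncard
    _ ≤ R.ncard + (insert s(x, y) K).ncard := Set.ncard_le_ncard_sdiff_add_ncard _ _
    _ ≤ (G.map π).edgeSet.ncard + ((G.commonNeighbors x y).ncard + 1) := by
      gcongr
      · exact h.injOn_sym2Map.ncard_image ▸ Set.ncard_le_ncard hmaps
      · exact (Set.ncard_insert_le _ _).trans (Nat.succ_le_succ (Set.ncard_image_le))
    _ = _ := by ring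

section Triangles

variable [Finite V] [DecidableEq W]

theorem exists_nonseparatingTriangle (h : IsEdgeContraction G x y π) (h3 : IsKConnected 3 G)
    (hcard : 5 ≤ Nat.card V) (hya : y ≠ a) (hyb : y ≠ b) (hab : G.Adj a b)
    (hxa : G.Adj x a) (hxb : G.Adj x b) (hS : ¬ Separates G {x, y, a, b}) :
    ∃ T ∈ nonseparatingTriangles G, ¬ (x ∈ T ∧ y ∈ T) ∧ T.image π = {π x, π a, π b} := by
  classical
  rw [Set.insert_comm] at hS
  have hxy := h.adj.ne
  rcases h3.not_separates_triple hcard h.adj hya hyb hxa hxb hS with hT | ⟨hya', hyb', hT⟩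
  · exact ⟨_, mem_nonseparatingTriangles hxa hxb hab hT, by grind, by simp [Finset.image_insert]⟩
  · have hxT : x ∉ ({y, a, b} : Finset V) := by simp [hxy, hxa.ne, hxb.ne]
    exact ⟨_, mem_nonseparatingTriangles hya' hyb' hab hT, fun hT => hxT hT.1,
      by simp [Finset.image_insert, h.map_eq]⟩

theorem exists_triangle_or_isPeripheralPair_of_mem (h : IsEdgeContraction G x y π)
    (h3 : IsKConnected 3 G) (hcard : 5 ≤ Nat.card V) {T' : Finset W}
    (hT' : T' ∈ nonseparatingTriangles (G.map π)) (hx : π x ∈ T') :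
    (∃ T ∈ nonseparatingTriangles G, ¬ (x ∈ T ∧ y ∈ T) ∧ T.image π = T') ∨
      ∃ a b, IsPeripheralPair G x y a b ∧ a ≠ b ∧ {π x, π a, π b} = T' := by
  obtain ⟨hcl, hS⟩ := hT'
  rw [← h.separates_preimage_iff] at hS
  obtain ⟨p, q, hxp, hxq, hpq, rfl⟩ := exists_eq_insert_of_mem_cliqueSet_three hcl hx
  obtain ⟨a, rfl⟩ := h.surjective p
  obtain ⟨b, rfl⟩ := h.surjective q
  obtain ⟨hax, hay⟩ := h.map_ne_left_iff.1 hxp.ne'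
  obtain ⟨hbx, hby⟩ := h.map_ne_left_iff.1 hxq.ne'
  rw [h.map_adj_iff hax hay hbx hby] at hpq
  rw [h.map_adj_left_iff hax hay] at hxp
  rw [h.map_adj_left_iff hbx hby] at hxq
  replace hS : ¬ Separates G {x, y, a, b} := by
    convert hS
    ext v
    have := h.map_eq_left_iff (a := v)
    have := h.map_eq_iff hax hay (b := v)
    have := h.map_eq_iff hbx hby (b := v)
    simp only [Set.mem_insert_iff, Set.mem_singleton_iff, Finset.coe_insert, Finset.coe_singleton,
      Set.mem_preimage]
    grind
  by_cases hab : G.Adj x a ∧ G.Adj x b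
  · exact .inl (h.exists_nonseparatingTriangle h3 hcard hay.symm hby.symm hpq hab.1 hab.2 hS)
  by_cases hab' : G.Adj y a ∧ G.Adj y b
  · rw [Set.insert_comm] at hS
    have := h.symm.exists_nonseparatingTriangle h3 hcard hax.symm hbx.symm hpq hab'.1 hab'.2 hS
    simp only [← h.map_eq, and_comm (a := y ∈ _)] at this
    exact .inl this
  by_cases hxa : G.Adj x a
  · exact .inr ⟨a, b, ⟨hxa, by tauto, hay, hbx, .inr ⟨hpq, by tauto, by tauto⟩, hS⟩, hpq.ne, rfl⟩
  · refine .inr ⟨b, a, ⟨by tauto, by tauto, hby, hax, .inr ⟨hpq.symm, hxa, by tauto⟩, ?_⟩,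
      hpq.ne', by grind⟩
    rwa [Set.pair_comm]

theorem exists_triangle_or_isPeripheralPair (h : IsEdgeContraction G x y π)
    (h3 : IsKConnected 3 G) (hcard : 5 ≤ Nat.card V) {T' : Finset W}
    (hT' : T' ∈ nonseparatingTriangles (G.map π)) :
    (∃ T ∈ nonseparatingTriangles G, ¬ (x ∈ T ∧ y ∈ T) ∧ T.image π = T') ∨
      ∃ a b, IsPeripheralPair G x y a b ∧ a ≠ b ∧ {π x, π a, π b} = T' := by
  classical
  by_cases hx : π x ∈ T'
  · exact h.exists_triangle_or_isPeripheralPair_of_mem h3 hcard hT' hx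
  obtain ⟨hcl, hS⟩ := hT'
  rw [← h.separates_preimage_iff] at hS
  obtain ⟨p, q, r, hpq, hpr, hqr, rfl⟩ := is3Clique_iff.1 hcl
  obtain ⟨a, rfl⟩ := h.surjective p
  obtain ⟨b, rfl⟩ := h.surjective q
  obtain ⟨c, rfl⟩ := h.surjective r
  simp only [Finset.mem_insert, Finset.mem_singleton, not_or, ← ne_eq] at hx
  obtain ⟨hax, hay⟩ := h.map_ne_left_iff.1 hx.1.symm
  obtain ⟨hbx, hby⟩ := h.map_ne_left_iff.1 hx.2.1.symm
  obtain ⟨hcx, hcy⟩ := h.map_ne_left_iff.1 hx.2.2.symm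
  rw [h.map_adj_iff hax hay hbx hby] at hpq
  rw [h.map_adj_iff hax hay hcx hcy] at hpr
  rw [h.map_adj_iff hbx hby hcx hcy] at hqr
  refine .inl ⟨_, mem_nonseparatingTriangles hpq hpr hqr ?_, by grind,
    by simp [Finset.image_insert]⟩
  convert hS
  ext v
  have := h.map_eq_iff hax hay (b := v)
  have := h.map_eq_iff hbx hby (b := v)
  have := h.map_eq_iff hcx hcy (b := v)
  simp only [Set.mem_insert_iff, Set.mem_singleton_iff, Finset.coe_insert, Finset.coe_singleton,
    Set.mem_preimage]
  grind

end Triangles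

/-- Contracting an edge destroys the triangles containing it; the only new nonseparating triangles
come from induced nonseparating 4-cycles through that edge. -/
theorem ncard_nonseparatingTriangles_le [Finite V] (h : IsEdgeContraction G x y π)
    (hG : IsPlanar G) (h3 : IsKConnected 3 G) (hcard : 5 ≤ Nat.card V)
    (hcon : ∀ z, ¬ Separates G {x, y, z}) :
    (nonseparatingTriangles (G.map π)).ncard + 2 * (G.commonNeighbors x y).ncard ≤
      (nonseparatingTriangles G).ncard + 2 := by
  classical
  have := Finite.of_surjective π h.surjective
  set N₀ := {T ∈ nonseparatingTriangles G | ¬ (x ∈ T ∧ y ∈ T)}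
  set P := {p : V × V | IsPeripheralPair G x y p.1 p.2 ∧ p.1 ≠ p.2}
  have hN₀P : (nonseparatingTriangles (G.map π)).ncard ≤ N₀.ncard + P.ncard := by
    refine le_trans (Set.ncard_le_ncard (t := Finset.image π '' N₀ ∪
      (fun p => {π x, π p.1, π p.2}) '' P) fun T hT => ?_) ?_
    · rcases h.exists_triangle_or_isPeripheralPair h3 hcard hT with
        ⟨T₀, hT₀, hxy, rfl⟩ | ⟨a, b, hp, hab, rfl⟩
      exacts [.inl ⟨T₀, ⟨hT₀, hxy⟩, rfl⟩, .inr ⟨(a, b), ⟨hp, hab⟩, rfl⟩]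
    · grw [Set.ncard_union_le, Set.ncard_image_le, Set.ncard_image_le]
  have hdiag : {c | IsPeripheralPair G x y c c} = G.commonNeighbors x y := by
    ext c
    simp [isPeripheralPair_self_iff, mem_commonNeighbors, hcon]
  have hthrough := ncard_nonseparatingTriangles_of_adj h.adj
  have htwo : _ + P.ncard ≤ 2 := ncard_isPeripheralPair_self_add_le_two hG h3 h.adj
  have hsplit := Set.ncard_inter_add_ncard_sdiff_eq_ncard (nonseparatingTriangles G)
    {T | x ∈ T ∧ y ∈ T}
  rw [hdiag] at hthrough htwo
  change {T ∈ nonseparatingTriangles G | x ∈ T ∧ y ∈ T}.ncard + N₀.ncard = _ at hsplit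
  omega

end IsEdgeContraction

section Euler

variable [Finite V] {G : SimpleGraph V}

theorem ncard_edgeSet_le_choose_two : G.edgeSet.ncard ≤ (Nat.card V).choose 2 := by
  cases nonempty_fintype V
  classical
  rw [← coe_edgeFinset, Set.ncard_coe_finset, Nat.card_eq_fintype_card]
  exact card_edgeFinset_le_card_choose_two

theorem IsKConnected.eq_top {k : ℕ} (h : IsKConnected k G) (hcard : Nat.card V = k + 1) :
    G = ⊤ := by
  by_contra hG
  obtain ⟨a, b, hab, hadj⟩ := ne_top_iff_exists_not_adj.1 hG
  have hlt : ({a, b}ᶜ : Set V).ncard < k := by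
    have := Set.ncard_add_ncard_compl {a, b}
    rw [Set.ncard_pair hab] at this
    omega
  refine (isKConnected_iff.1 h).2 _ hlt ⟨{a}, Set.singleton_nonempty a, by simp, ?_, b, ?_⟩
  · rintro _ rfl c hac
    have : c ≠ b := by rintro rfl; exact hadj hac
    simp [this, em]
  · simp [hab.symm]

theorem ncard_nonseparatingTriangles_top :
    (nonseparatingTriangles (⊤ : SimpleGraph V)).ncard = (Nat.card V).choose 3 := by
  cases nonempty_fintype V
  have : nonseparatingTriangles (⊤ : SimpleGraph V) =
      ↑(Finset.univ.powersetCard 3 : Finset (Finset V)) := by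
    ext T
    simp [nonseparatingTriangles, not_separates_top, isNClique_iff, IsClique, Set.Pairwise]
  rw [this, Set.ncard_coe_finset, Finset.card_powersetCard, Finset.card_univ,
    Nat.card_eq_fintype_card]

theorem IsPlanar.two_mul_ncard_edgeSet_add_eight_le (hG : IsPlanar G) (h3 : IsKConnected 3 G) :
    2 * G.edgeSet.ncard + 8 ≤ 4 * Nat.card V + (nonseparatingTriangles G).ncard := by
  induction hn : Nat.card V generalizing V with
  | zero => have := (isKConnected_iff.1 h3).1; omega
  | succ n ih =>
    obtain hn4 | hn5 := (Nat.succ_le_of_lt (isKConnected_iff.1 h3).1).eq_or_lt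
    · have hedge := ncard_edgeSet_le_choose_two (G := G)
      have htri := ncard_nonseparatingTriangles_top (V := V)
      rw [← h3.eq_top hn4.symm, ← hn4] at htri
      rw [← hn4] at hedge
      simp only [Nat.choose] at hedge htri
      omega
    · obtain ⟨x, y, hxy, hcon⟩ := h3.exists_not_separates
      obtain ⟨π, hπ⟩ := exists_isEdgeContraction hxy
      have hcard := hπ.natCard_add_one
      have hedge := hπ.ncard_edgeSet_le
      have htri := hπ.ncard_nonseparatingTriangles_le hG h3 hn5 hcon
      have := ih (hG.of_hasMinor hπ.hasMinor) (hπ.isKConnected_three h3 hn5 hcon) (by omega)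
      omega

end Euler

section Counting

variable {G : SimpleGraph V} {u v : V}

theorem edgeDisjointTriangles_of_not_containsK4minus (h : ¬ containsK4minus G) :
    G.EdgeDisjointTriangles := by
  classical
  intro S hS T hT hST a ha b hb
  by_contra hab
  obtain ⟨c, hadj, hac, hbc, rfl⟩ := exists_eq_triple_of_mem_cliqueSet_three hS ha.1 hb.1 hab
  obtain ⟨d, -, had, hbd, rfl⟩ := exists_eq_triple_of_mem_cliqueSet_three hT ha.2 hb.2 hab
  have hcd : c ≠ d := by rintro rfl; exact hST rfl
  exact h ⟨a, b, c, d, hab, hac.ne, had.ne, hbc.ne, hbd.ne, hcd, hadj, hac, had, hbc, hbd⟩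

theorem three_mul_ncard_cliqueSet_three_le [Finite V] (h : ¬ containsK4minus G) :
    3 * (G.cliqueSet 3).ncard ≤ G.edgeSet.ncard := by
  cases nonempty_fintype V
  classical
  rw [← coe_cliqueFinset, ← coe_edgeFinset, Set.ncard_coe_finset, Set.ncard_coe_finset]
  exact (edgeDisjointTriangles_of_not_containsK4minus h).card_edgeFinset_le

theorem IsKConnected.le_ncard_neighborSet [Finite V] {k : ℕ} (h : IsKConnected k G) (v : V) :
    k ≤ (G.neighborSet v).ncard := by
  by_contra! hlt
  rw [isKConnected_iff] at h
  obtain ⟨o, ho⟩ := exists_notMem_of_ncard_lt_card (S := insert v (G.neighborSet v))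
    ((Set.ncard_insert_le _ _).trans_lt (by omega))
  refine h.2 _ hlt ⟨{v}, Set.singleton_nonempty v, by simp, ?_, o, ho⟩
  rintro _ rfl b hb
  exact .inr hb

theorem sum_ncard_neighborSet [Fintype V] :
    ∑ v, (G.neighborSet v).ncard = 2 * G.edgeSet.ncard := by
  classical
  rw [← coe_edgeFinset, Set.ncard_coe_finset, ← sum_degrees_eq_twice_card_edges]
  refine Finset.sum_congr rfl fun v _ => ?_
  rw [← card_neighborFinset_eq_degree, ← Set.ncard_coe_finset, coe_neighborFinset]

theorem IsKConnected.five_mul_card_le [Finite V] (h3 : IsKConnected 3 G)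
    (hdeg : ∀ w, w ≠ u → w ≠ v → 5 ≤ (G.neighborSet w).ncard) :
    5 * Nat.card V ≤ 2 * G.edgeSet.ncard + 4 := by
  cases nonempty_fintype V
  classical
  have hsum : ∑ _w : V, 5 ≤ ∑ w,
      ((G.neighborSet w).ncard + ((if w = u then 2 else 0) + if w = v then 2 else 0)) := by
    refine Finset.sum_le_sum fun w _ => ?_
    have := h3.le_ncard_neighborSet w
    have := hdeg w
    split_ifs <;> grind
  simp only [Finset.sum_add_distrib, sum_ncard_neighborSet, Finset.sum_ite_eq', Finset.mem_univ,
    if_true, Finset.sum_const, Finset.card_univ, ← Nat.card_eq_fintype_card, smul_eq_mul] at hsum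
  omega

theorem nonseparatingTriangles_subset :
    nonseparatingTriangles G ⊆ {T ∈ nonseparatingTriangles G | u ∈ T ∧ v ∈ T} ∪
      (G.deleteEdges {s(u, v)}).cliqueSet 3 := by
  intro T hT
  by_cases huv : u ∈ T ∧ v ∈ T
  · exact .inl ⟨hT, huv⟩
  · refine .inr ⟨fun a ha b hb hab => ?_, hT.1.card_eq⟩
    rw [deleteEdges_adj, Set.mem_singleton_iff, Sym2.eq_iff]
    refine ⟨hT.1.isClique ha hb hab, ?_⟩
    rintro (⟨rfl, rfl⟩ | ⟨rfl, rfl⟩)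
    exacts [huv ⟨ha, hb⟩, huv ⟨hb, ha⟩]

theorem IsPlanar.containsK4minus_deleteEdges_of_isKConnected [Finite V] (hG : IsPlanar G)
    (h3 : IsKConnected 3 G) (huv : G.Adj u v)
    (hdeg : ∀ w, w ≠ u → w ≠ v → 5 ≤ (G.neighborSet w).ncard) :
    containsK4minus (G.deleteEdges {s(u, v)}) := by
  classical
  by_contra hK
  have hfaces := hG.two_mul_ncard_edgeSet_add_eight_le h3
  have hdegree := h3.five_mul_card_le hdeg
  have htriangles := three_mul_ncard_cliqueSet_three_le hK
  have hedges : (G.deleteEdges {s(u, v)}).edgeSet.ncard + 1 = G.edgeSet.ncard := by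
    rw [edgeSet_deleteEdges]
    exact Set.ncard_sdiff_singleton_add_one huv
  have hsplit : (nonseparatingTriangles G).ncard ≤
      2 + ((G.deleteEdges {s(u, v)}).cliqueSet 3).ncard := by
    grw [Set.ncard_le_ncard (nonseparatingTriangles_subset (u := u) (v := v)), Set.ncard_union_le,
      ncard_nonseparatingTriangles_of_adj huv]
    have := ncard_isPeripheralPair_self_add_le_two hG h3 huv
    omega
  omega

end Counting

section SmallCuts

variable {G : SimpleGraph V} {S A D X : Set V} {a b u v : V}

theorem containsK4minus.of_isContained {W : Type*} {H : SimpleGraph W} (h : containsK4minus G)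
    (hGH : G.IsContained H) : containsK4minus H := by
  obtain ⟨f⟩ := hGH
  have hf := f.injective
  have hadj {u v : V} (huv : G.Adj u v) : H.Adj (f u) (f v) := f.toHom.map_adj huv
  obtain ⟨a, b, c, d, hab, hac, had, hbc, hbd, hcd, h1, h2, h3, h4, h5⟩ := h
  exact ⟨f a, f b, f c, f d, hf.ne hab, hf.ne hac, hf.ne had, hf.ne hbc, hf.ne hbd, hf.ne hcd,
    hadj h1, hadj h2, hadj h3, hadj h4, hadj h5⟩

theorem hasMinor_induce (X : Set V) : HasMinor G (G.induce X) :=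
  ⟨fun w => {w.1}, fun w => by simp, fun _ _ hw => by simpa [Subtype.ext_iff] using hw,
    fun w w' h => ⟨w, rfl, w', rfl, h⟩⟩

theorem hasMinor_induce_sup_edge (hD : (G.induce D).Connected) (hDX : Disjoint D X)
    (ha : Touches G D {a}) (hb : Touches G D {b}) : HasMinor G ((G ⊔ edge a b).induce X) := by
  classical
  have hsub {w : V} : w ∈ if w = a then insert a D else {w} := by split_ifs <;> simp [*]
  have ha' : Touches G {a} D := ha.symm
  refine ⟨fun w => if w.1 = a then insert a D else {w.1}, fun w => ?_, fun w w' hw => ?_, ?_⟩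
  · change (G.induce (if w.1 = a then insert a D else {w.1})).Connected
    by_cases hw : w.1 = a
    · rw [if_pos hw]
      exact ha'.connected_union (by simp) hD
    · rw [if_neg hw]
      simp
  · have hw' : w.1 ≠ w'.1 := Subtype.coe_ne_coe.2 hw
    have := Set.disjoint_right.1 hDX w.2
    have := Set.disjoint_right.1 hDX w'.2
    rw [Set.disjoint_left]
    grind
  · rintro w w' (h | h)
    · exact ⟨w, hsub, w', hsub, h⟩
    · have hD' {w : V} (hw : w = a) : D ⊆ if w = a then insert a D else {w} := by simp [hw]
      rcases (edge_adj a b w w').1 h with ⟨⟨hw, hw'⟩ | ⟨hw, hw'⟩, -⟩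
      · exact hb.mono (hD' hw) (Set.singleton_subset_iff.2 (hw' ▸ hsub))
      · exact hb.symm.mono (Set.singleton_subset_iff.2 (hw ▸ hsub)) (hD' hw')

theorem IsPlanar.induce_sup_edge (hG : IsPlanar G) (hS : Minimal (Separates G) S)
    (hA : IsFragment G S A) (hab : G.Adj a b ∨ a ≠ b ∧ S = {a, b}) :
    IsPlanar ((G ⊔ edge a b).induce (A ∪ S)) := by
  rcases hab with hab | ⟨hab, rfl⟩
  · rw [sup_edge_of_adj G hab]
    exact hG.of_hasMinor (hasMinor_induce _)
  obtain ⟨o, ho⟩ := hA.exists_notMem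
  obtain ⟨D, hD, hoD⟩ := exists_isComponent_mem fun h => ho (.inr h)
  have hDA : Disjoint D A := Set.disjoint_left.2 fun v hv hvA =>
    ho (.inl (hD.subset_of_mem hA.mem_union_of_adj hv hvA hoD))
  have hb : ¬ Separates G {b} := hS.not_prop_of_lt (Set.ssubset_insert hab)
  have ha : ¬ Separates G {a} := hS.not_prop_of_lt (Set.pair_comm a b ▸ Set.ssubset_insert hab.symm)
  refine hG.of_hasMinor (hasMinor_induce_sup_edge hD.connected
    (Set.disjoint_union_right.2 ⟨hDA, hD.disjoint⟩) (hD.touches_singleton hab hb) ?_)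
  rw [Set.pair_comm] at hD
  exact hD.touches_singleton hab.symm ha

theorem IsFragment.natCard_lt [Finite V] (hA : IsFragment G S A) :
    Nat.card ↥(A ∪ S) < Nat.card V := by
  rw [Nat.card_coe_set_eq]
  exact Set.ncard_lt_card ((Set.ne_univ_iff_exists_notMem _).2 hA.exists_notMem)

theorem IsFragment.exists_subset_pair [Finite V] (hA : IsFragment G S A)
    (hS : Minimal (Separates G) S) (hS3 : S.ncard < 3)
    (hnbr : ∀ w ∈ A, (G.neighborSet w).Nonempty) :
    ∃ a ∈ A ∪ S, ∃ b ∈ A ∪ S, S ⊆ {a, b} ∧ (G.Adj a b ∨ a ≠ b ∧ S = {a, b}) := by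
  obtain h0 | h1 | h2 : S.ncard = 0 ∨ S.ncard = 1 ∨ S.ncard = 2 := by omega
  · obtain rfl := (Set.ncard_eq_zero).1 h0
    obtain ⟨a, ha⟩ := hA.nonempty
    obtain ⟨b, hab⟩ := hnbr a ha
    exact ⟨a, .inl ha, b, hA.mem_union_of_adj a ha b hab, Set.empty_subset _, .inl hab⟩
  · obtain ⟨a, rfl⟩ := Set.ncard_eq_one.1 h1
    have h0 : ¬ Separates G ∅ := hS.not_prop_of_lt (Set.singleton_nonempty a).empty_ssubset
    rw [← insert_empty_eq] at hA
    obtain ⟨b, hb, hab⟩ := hA.exists_adj_of_not_separates h0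
    exact ⟨a, .inr rfl, b, .inl hb, by simp, .inl hab⟩
  · obtain ⟨a, b, hab, rfl⟩ := Set.ncard_eq_two.1 h2
    exact ⟨a, by simp, b, by simp, subset_rfl, .inr ⟨hab, rfl⟩⟩

theorem ncard_neighborSet_le_induce [Finite V] {H : SimpleGraph V} (hGH : G ≤ H) {w : X}
    (hw : G.neighborSet w ⊆ X) :
    (G.neighborSet w).ncard ≤ ((H.induce X).neighborSet w).ncard := by
  have hsub : G.neighborSet w ⊆ Subtype.val '' (H.induce X).neighborSet w :=
    fun v hv => ⟨⟨v, hw hv⟩, hGH hv, rfl⟩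
  exact (Set.ncard_le_ncard hsub).trans Set.ncard_image_le

theorem containsK4minus.of_induce_sup_edge {a b : X}
    (hX : u ∈ X → v ∈ X → s(u, v) = s(a.1, b.1))
    (h : containsK4minus (((G ⊔ edge a.1 b.1).induce X).deleteEdges {s(a, b)})) :
    containsK4minus (G.deleteEdges {s(u, v)}) := by
  refine h.of_isContained ⟨⟨⟨Subtype.val, fun {c d} hcd => ?_⟩, Subtype.val_injective⟩⟩
  obtain ⟨hcd, hne⟩ := (deleteEdges_adj ..).1 hcd
  have hne' : s(c.1, d.1) ≠ s(a.1, b.1) := by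
    simpa [Subtype.ext_iff] using hne
  have hG : G.Adj c d := hcd.resolve_right fun hab =>
    hne' (Sym2.eq_iff.2 ((edge_adj a.1 b.1 c d).1 hab).1)
  refine (deleteEdges_adj ..).2 ⟨hG, fun he => hne' ?_⟩
  rw [Set.mem_singleton_iff] at he
  have hX' {w : V} (hw : w ∈ s(u, v)) : w ∈ X := by
    rw [← he, Sym2.mem_iff] at hw
    rcases hw with rfl | rfl
    exacts [c.2, d.2]
  exact he.trans (hX (hX' (Sym2.mem_mk_left u v)) (hX' (Sym2.mem_mk_right u v)))

theorem exists_minimal_separates_of_not_isKConnected [Finite V] {k : ℕ} (hk : k < Nat.card V)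
    (h : ¬ IsKConnected k G) : ∃ S : Set V, S.ncard < k ∧ Minimal (Separates G) S := by
  simp only [isKConnected_iff, hk, true_and, not_forall, not_not] at h
  obtain ⟨T, hTk, hT⟩ := h
  obtain ⟨S, hST, hS⟩ := exists_minimal_le_of_wellFoundedLT (Separates G) T hT
  exact ⟨S, (Set.ncard_le_ncard hST).trans_lt hTk, hS⟩

theorem IsPlanar.containsK4minus_deleteEdges [Finite V] (hG : IsPlanar G) (huv : G.Adj u v)
    (hcard : 2 < Nat.card V) (hdeg : ∀ w, w ≠ u → w ≠ v → 5 ≤ (G.neighborSet w).ncard) :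
    containsK4minus (G.deleteEdges {s(u, v)}) := by
  induction hn : Nat.card V using Nat.strong_induction_on generalizing V with
  | _ n ih =>
  by_cases h3 : IsKConnected 3 G
  · exact hG.containsK4minus_deleteEdges_of_isKConnected h3 huv hdeg
  obtain ⟨w, hw⟩ := exists_notMem_of_ncard_lt_card ((ncard_pair_le u v).trans_lt hcard)
  simp only [Set.mem_insert_iff, Set.mem_singleton_iff, not_or] at hw
  have hcard5 : 5 ≤ Nat.card V := (hdeg w hw.1 hw.2).trans (Set.ncard_le_card _)
  obtain ⟨S, hS3, hS⟩ := exists_minimal_separates_of_not_isKConnected (by omega) h3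
  obtain ⟨A, hA⟩ := hS.prop
  obtain ⟨A, hA, huA, hvA⟩ := hA.exists_notMem_of_adj huv
  have hdegA (w : V) (hw : w ∈ A) : 5 ≤ (G.neighborSet w).ncard :=
    hdeg w (ne_of_mem_of_not_mem hw huA) (ne_of_mem_of_not_mem hw hvA)
  obtain ⟨a, ha, b, hb, hSab, hab⟩ := hA.exists_subset_pair hS hS3 fun w hw =>
    Set.nonempty_of_ncard_ne_zero (by have := hdegA w hw; omega)
  have hcard' : 2 < Nat.card ↥(A ∪ S) := by
    obtain ⟨w, hw⟩ := hA.nonempty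
    have hnbr : (G.neighborSet w).ncard ≤ (A ∪ S).ncard :=
      Set.ncard_le_ncard (hA.mem_union_of_adj w hw)
    have := hdegA w hw
    rw [Nat.card_coe_set_eq]
    omega
  have hadj : ((G ⊔ edge a b).induce (A ∪ S)).Adj ⟨a, ha⟩ ⟨b, hb⟩ :=
    .inr ((edge_adj ..).2 ⟨.inl ⟨rfl, rfl⟩, hab.elim Adj.ne And.left⟩)
  refine .of_induce_sup_edge (a := ⟨a, ha⟩) (b := ⟨b, hb⟩) (fun hu hv => ?_)
    (ih _ (hn ▸ hA.natCard_lt) (hG.induce_sup_edge hS hA hab) hadj hcard' (fun w hwa hwb => ?_) rfl)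
  · have hu := hSab (hu.resolve_left huA)
    have hv := hSab (hv.resolve_left hvA)
    have := huv.ne
    grind [Sym2.eq_iff]
  · have hwA : w.1 ∈ A := w.2.resolve_right fun hw => by
      rcases hSab hw with h | h
      exacts [hwa (Subtype.ext h), hwb (Subtype.ext h)]
    exact (hdegA w hwA).trans (ncard_neighborSet_le_induce le_sup_left (hA.mem_union_of_adj w hwA))

end SmallCuts

theorem stmt1_general {V : Type*} [Finite V] [Nonempty V] (G : SimpleGraph V) (hpl : IsPlanar G)
    (hdeg : ∀ v : V, 5 ≤ (G.neighborSet v).ncard) : containsK4minus G := by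
  obtain ⟨u⟩ := ‹Nonempty V›
  obtain ⟨v, huv⟩ : (G.neighborSet u).Nonempty :=
    Set.nonempty_of_ncard_ne_zero (by have := hdeg u; omega)
  have hcard : 5 ≤ Nat.card V := (hdeg u).trans (Set.ncard_le_card _)
  exact (hpl.containsK4minus_deleteEdges huv (by omega) fun w _ _ => hdeg w).of_isContained
    (.of_le (deleteEdges_le _))

/-- Every 2-connected planar graph with minimum degree at least 5
contains `K₄⁻` as a subgraph. -/
theorem stmt1 {V : Type*} [Fintype V] (G : SimpleGraph V)
    (h2 : IsKConnected 2 G) (hpl : IsPlanar G)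
    (hdeg : ∀ v : V, 5 ≤ (G.neighborSet v).ncard) :
    containsK4minus G :=
  have : Nonempty V := (Set.nonempty_of_ncard_ne_zero (ne_zero_of_lt h2.1)).to_type
  stmt1_general G hpl hdeg
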